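/- arXiv:1402.0440 — 4 statements merged into one kernel-verified Lean document; each statement's English description precedes it below -/
import Mathlib

section
/- Let U ⊆ ℂ be a bounded, open, connected, simply connected set with 0 ∈ U, and let V ⊆ U be an open, connected, simply connected set with 0 ∈ V. Let g : 𝔻 → U and h : 𝔻 → V be biholomorphisms from the open unit disk with g(0) = 0 and h(0) = 0. Let ρ_U = dist(0, ∂U) and ρ_V = dist(0, ∂V) be the distances from 0 to the frontiers of U and V, and let F(x) = 4x/(1+x)². Then |h′(0)| ≤ |g′(0)| · F(ρ_V/ρ_U). -/
open Metric

/-!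
By the Riemann map `g` the problem moves to the disk: `φ = g⁻¹ ∘ h` is an injective self-map of
the disk fixing `0`, and it omits `w = g⁻¹ p`, where `p` is a frontier point of `V` nearest to
`0`. A Koebe function `z / (1 - c * z) ^ 2` with `c * w = -‖w‖` maps the disk injectively and
sends `w` to a point of modulus `‖w‖ / (1 + ‖w‖) ^ 2`, so Koebe's quarter theorem, applied to its
composition with `φ`, gives `‖φ' 0‖ ≤ 4 * ‖w‖ / (1 + ‖w‖) ^ 2`. Schwarz's lemma for `g⁻¹` on the
disk of radius `ρ_U` about `0` gives `‖w‖ ≤ ρ_V / ρ_U`, and `4 * x / (1 + x) ^ 2` increases on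
`[0, 1]`.

The quarter theorem is Bieberbach's inequality for `f` and for `(w - f)⁻¹`, with `w` an omitted
value of `f`. Bieberbach's inequality in turn is Gronwall's `‖q' 0‖ ≤ 1` for `z⁻¹ + q z` injective
on the punctured disk, applied to the reciprocal of an odd square root transform. Gronwall's
inequality compares two estimates of the area of the image of `ε < ‖z‖ < ρ` as `ε` tends to `0`:
the integral of the squared derivative bounds it from below, and it is bounded above because the
image lies in a neighborhood of an ellipse, which a map of constant Jacobian,
`w ↦ w - q' 0 * ε ^ 2 * conj w`, takes to a disk.
-/

section

open Set Filter MeasureTheory Topology ComplexConjugate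
open scoped Real

/-! ### Injective holomorphic functions -/

section Injective

variable {U : Set ℂ} {f G : ℂ → ℂ} {z : ℂ}

theorem nhds_le_map_nhds_of_injOn (hf : DifferentiableOn ℂ f U) (hU : IsOpen U)
    (hinj : InjOn f U) (hz : z ∈ U) : 𝓝 (f z) ≤ map f (𝓝 z) := by
  refine (hf.analyticAt (hU.mem_nhds hz)).eventually_constant_or_nhds_le_map_nhds.resolve_left
    fun hconst => ?_
  obtain ⟨w, hw, hwz⟩ := (((hconst.and (hU.eventually_mem hz)).filter_mono
    nhdsWithin_le_nhds).and self_mem_nhdsWithin : ∀ᶠ w in 𝓝[≠] z, _).exists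
  exact hwz (hinj hw.2 hz hw.1)

theorem isOpen_image_of_injOn (hf : DifferentiableOn ℂ f U) (hU : IsOpen U) (hinj : InjOn f U) :
    IsOpen (f '' U) := by
  refine isOpen_iff_mem_nhds.2 ?_
  rintro _ ⟨z, hz, rfl⟩
  exact nhds_le_map_nhds_of_injOn hf hU hinj hz (image_mem_map (hU.mem_nhds hz))

theorem tendsto_nhdsNE_of_leftInvOn (hf : DifferentiableOn ℂ f U) (hU : IsOpen U)
    (hG : LeftInvOn G f U) (hz : z ∈ U) : Tendsto G (𝓝[≠] f z) (𝓝[≠] z) := by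
  have hnhds := nhds_le_map_nhds_of_injOn hf hU hG.injOn hz
  have hGf : G ∘ f =ᶠ[𝓝 z] id := eventuallyEq_of_mem (hU.mem_nhds hz) hG
  have hcont : Tendsto G (𝓝 (f z)) (𝓝 z) := fun s hs => by
    refine hnhds (mem_map.2 ?_)
    filter_upwards [hs, hGf] with w hw hGw
    simpa [show G (f w) = w from hGw] using hw
  refine tendsto_nhdsWithin_of_tendsto_nhds_of_eventually_within _
    (hcont.mono_left nhdsWithin_le_nhds) (eventually_nhdsWithin_iff.2 (hnhds (mem_map.2 ?_)))
  filter_upwards [hGf] with w hGw hne hw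
  exact hne (congrArg f ((show G (f w) = w from hGw).symm.trans hw))

theorem eventually_deriv_ne_zero_of_injOn (hf : DifferentiableOn ℂ f U) (hU : IsOpen U)
    (hinj : InjOn f U) (hz : z ∈ U) : ∀ᶠ w in 𝓝[≠] z, deriv f w ≠ 0 := by
  have han := (hf.analyticAt (hU.mem_nhds hz)).deriv
  refine han.eventually_eq_zero_or_eventually_ne_zero.resolve_left fun hzero => ?_
  obtain ⟨r, hr, hball⟩ := Metric.mem_nhds_iff.1 (hzero.and (hU.eventually_mem hz))
  obtain ⟨w, hw, hwz⟩ := ((eventually_nhdsWithin_of_eventually_nhds (ball_mem_nhds z hr)).and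
    self_mem_nhdsWithin : ∀ᶠ w in 𝓝[≠] z, _).exists
  refine hwz (hinj (hball hw).2 hz ?_)
  exact isOpen_ball.is_const_of_deriv_eq_zero (convex_ball z r).isPreconnected
    (hf.mono fun x hx => (hball hx).2) (fun x hx => (hball hx).1) hw (mem_ball_self hr)

-- The inverse function theorem applies off the isolated critical points of `f`, whose images are
-- removable singularities of `G`.
theorem differentiableOn_of_leftInvOn (hf : DifferentiableOn ℂ f U) (hU : IsOpen U)
    (hG : LeftInvOn G f U) : DifferentiableOn ℂ G (f '' U) := by
  have hopen := isOpen_image_of_injOn hf hU hG.injOn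
  have hcont : ∀ z ∈ U, ContinuousAt G (f z) := fun z hz => by
    refine continuousAt_iff_punctured_nhds.2 ?_
    rw [hG hz]
    exact (tendsto_nhdsNE_of_leftInvOn hf hU hG hz).mono_right nhdsWithin_le_nhds
  have hregular : ∀ z ∈ U, deriv f z ≠ 0 → DifferentiableAt ℂ G (f z) := fun z hz hne => by
    have hd := (hf.differentiableAt (hU.mem_nhds hz)).hasDerivAt
    rw [← hG hz] at hd hne
    refine (HasDerivAt.of_local_left_inverse (hcont z hz) hd hne ?_).differentiableAt
    filter_upwards [hopen.mem_nhds (mem_image_of_mem f hz)]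
    rintro _ ⟨w, hw, rfl⟩
    rw [hG hw]
  rintro _ ⟨z, hz, rfl⟩
  refine (Complex.analyticAt_of_differentiable_on_punctured_nhds_of_continuousAt ?_
    (hcont z hz)).differentiableAt.differentiableWithinAt
  filter_upwards [(tendsto_nhdsNE_of_leftInvOn hf hU hG hz).eventually
    (eventually_deriv_ne_zero_of_injOn hf hU hG.injOn hz),
    mem_nhdsWithin_of_mem_nhds (hopen.mem_nhds (mem_image_of_mem f hz))]
  rintro _ hne ⟨w, hw, rfl⟩
  rw [hG hw] at hne
  exact hregular w hw hne

theorem deriv_ne_zero_of_injOn (hf : DifferentiableOn ℂ f U) (hU : IsOpen U)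
    (hinj : InjOn f U) (hz : z ∈ U) : deriv f z ≠ 0 := by
  have hG := hinj.leftInvOn_invFunOn
  set G := Function.invFunOn f U
  have hGd := ((differentiableOn_of_leftInvOn hf hU hG).differentiableAt
    ((isOpen_image_of_injOn hf hU hinj).mem_nhds (mem_image_of_mem f hz))).hasDerivAt
  have hcomp := hGd.comp z (hf.differentiableAt (hU.mem_nhds hz)).hasDerivAt
  have hone := (hasDerivAt_id z).congr_of_eventuallyEq (eventuallyEq_of_mem (hU.mem_nhds hz) hG)
  exact right_ne_zero_of_mul_eq_one (hcomp.unique hone)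

theorem image_ne_univ_of_injOn (hf : DifferentiableOn ℂ f U) (hU : IsOpen U)
    (hinj : InjOn f U) (hbdd : Bornology.IsBounded U) : f '' U ≠ univ := fun huniv => by
  have hG := hinj.leftInvOn_invFunOn
  set G := Function.invFunOn f U
  have hGd : Differentiable ℂ G := by
    rw [← differentiableOn_univ, ← huniv]
    exact differentiableOn_of_leftInvOn hf hU hG
  have hrange : range G ⊆ U := by
    rw [← image_univ, ← huniv]
    exact (hG.image_image).subset
  obtain ⟨z, hz, -⟩ : (0 : ℂ) ∈ f '' U := huniv ▸ mem_univ _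
  have hconst : U ⊆ {z} := fun w hw => by
    rw [mem_singleton_iff, ← hG hw, ← hG hz]
    exact hGd.apply_eq_apply_of_bounded (hbdd.subset hrange) _ _
  obtain ⟨w, hw, hwz⟩ := ((hU.eventually_mem hz).filter_mono nhdsWithin_le_nhds |>.and
    self_mem_nhdsWithin : ∀ᶠ w in 𝓝[≠] z, _).exists
  exact hwz (hconst hw)

end Injective

/-! ### Areas of holomorphic images -/

section Area

theorem setIntegral_annulus_eq_integral_circleAverage {E : Type*} [NormedAddCommGroup E]
    [NormedSpace ℝ E] {f : ℂ → E} {ε ρ : ℝ} (hε : 0 ≤ ε) (hερ : ε ≤ ρ)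
    (hf : ContinuousOn f (closedBall 0 ρ \ ball 0 ε)) :
    ∫ z in ball 0 ρ \ closedBall 0 ε, f z =
      ∫ r in ε..ρ, (2 * π * r) • Real.circleAverage f 0 r := by
  have hmeas : MeasurableSet (ball (0 : ℂ) ρ \ closedBall 0 ε) :=
    measurableSet_ball.diff measurableSet_closedBall
  have hcont : ContinuousOn (fun p : ℝ × ℝ => p.1 • f (circleMap 0 p.1 p.2))
      (Icc ε ρ ×ˢ Icc (-π) π) := by
    refine continuousOn_fst.smul (hf.comp (by unfold circleMap; fun_prop) fun p hp => ?_)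
    simp [abs_of_nonneg (hε.trans hp.1.1), hp.1.1, hp.1.2]
  have hint : IntegrableOn (fun p : ℝ × ℝ => p.1 • f (circleMap 0 p.1 p.2))
      (Ioo ε ρ ×ˢ Ioo (-π) π) (volume.prod volume) :=
    (hcont.integrableOn_compact (isCompact_Icc.prod isCompact_Icc)).mono_set
      (prod_mono Ioo_subset_Icc_self Ioo_subset_Icc_self)
  have hpolar : EqOn (fun p : ℝ × ℝ => p.1 •
        (ball (0 : ℂ) ρ \ closedBall 0 ε).indicator f (Complex.polarCoord.symm p))
      ((Ioo ε ρ ×ˢ univ).indicator fun p => p.1 • f (circleMap 0 p.1 p.2)) polarCoord.target := by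
    rintro ⟨r, θ⟩ ⟨hr, -⟩
    have hr : 0 < r := hr
    have hcircle : Complex.polarCoord.symm (r, θ) = circleMap 0 r θ := by
      simp [Complex.polarCoord_symm_apply, circleMap_zero, Complex.exp_mul_I]
    simp [hcircle, indicator, abs_of_pos hr, and_comm]
  have htarget : polarCoord.target ∩ Ioo ε ρ ×ˢ univ = Ioo ε ρ ×ˢ Ioo (-π) π := by
    rw [polarCoord_target, prod_inter_prod, inter_univ,
      inter_eq_right.2 (show Ioo ε ρ ⊆ Ioi 0 from fun r hr => hε.trans_lt hr.1)]
  have hcircle : ∀ r, ∫ θ in Ioo (-π) π, r • f (circleMap 0 r θ) =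
      (2 * π * r) • Real.circleAverage f 0 r := fun r => by
    rw [Real.circleAverage_eq_integral_add (-π), integral_smul, ← integral_Ioc_eq_integral_Ioo,
      ← intervalIntegral.integral_of_le (by linarith [Real.pi_pos]),
      intervalIntegral.integral_comp_add_right (fun θ => f (circleMap 0 r θ)), smul_smul]
    congr 1
    · field
    · ring_nf
  rw [← integral_indicator hmeas, ← Complex.integral_comp_polarCoord_symm,
    setIntegral_congr_fun polarCoord.open_target.measurableSet hpolar,
    setIntegral_indicator (measurableSet_Ioo.prod MeasurableSet.univ), htarget,
    Measure.volume_eq_prod, setIntegral_prod _ hint]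
  simp_rw [hcircle]
  rw [intervalIntegral.integral_of_le hερ, integral_Ioc_eq_integral_Ioo]

theorem det_restrictScalars_toSpanSingleton (a : ℂ) :
    ((ContinuousLinearMap.toSpanSingleton ℂ a).restrictScalars ℝ : ℂ →L[ℝ] ℂ).det = ‖a‖ ^ 2 := by
  simp [ContinuousLinearMap.det, LinearMap.det_restrictScalars, Complex.sq_norm,
    Algebra.norm_complex_apply]

theorem volume_real_image_eq_integral_norm_sq_deriv {f f' : ℂ → ℂ} {s : Set ℂ}
    (hs : MeasurableSet s) (hf : ∀ z ∈ s, HasDerivWithinAt f (f' z) s z) (hinj : InjOn f s) :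
    volume.real (f '' s) = ∫ z in s, ‖f' z‖ ^ 2 := by
  have hchange := integral_image_eq_integral_abs_det_fderiv_smul volume hs
    (fun z hz => (hf z hz).hasFDerivWithinAt.restrictScalars ℝ) hinj fun _ => (1 : ℝ)
  simpa [det_restrictScalars_toSpanSingleton] using hchange

theorem inv_pow_four_add_norm_sq_add_re_le {z : ℂ} (hz : z ≠ 0) (p a : ℂ) :
    (‖z‖ ^ 4)⁻¹ + ‖a‖ ^ 2 + (2 * conj a * (p - a) - 2 * (z ^ 2 / ‖z‖ ^ 4) * p).re ≤
      ‖p - (z ^ 2)⁻¹‖ ^ 2 := by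
  have hconj : z ^ 2 / ‖z‖ ^ 4 = conj ((z ^ 2)⁻¹) := by
    rw [map_inv₀, map_pow, div_eq_iff (by simpa using hz),
      show (‖z‖ : ℂ) ^ 4 = (‖z‖ ^ 2) ^ 2 by ring, ← Complex.mul_conj']
    field [show conj z ≠ 0 by simpa using hz]
  have hnorm : (‖z‖ ^ 4)⁻¹ = ‖(z ^ 2)⁻¹‖ ^ 2 := by
    rw [norm_inv, norm_pow]
    ring
  have hsquares : ‖(z ^ 2)⁻¹‖ ^ 2 + ‖a‖ ^ 2 +
      (2 * conj a * (p - a) - 2 * conj ((z ^ 2)⁻¹) * p).re =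
        ‖p - (z ^ 2)⁻¹‖ ^ 2 - ‖p - a‖ ^ 2 := by
    simp only [Complex.sq_norm, Complex.normSq_apply, Complex.sub_re, Complex.sub_im,
      Complex.mul_re, Complex.mul_im, Complex.conj_re, Complex.conj_im, Complex.re_ofNat,
      Complex.im_ofNat]
    ring
  rw [hconj, hnorm, hsquares]
  exact sub_le_self _ (sq_nonneg _)

-- The cross term on the left of `inv_pow_four_add_norm_sq_add_re_le` is, on each circle about `0`,
-- the real part of a holomorphic function vanishing at `0`.
theorem inv_pow_four_add_norm_sq_le_circleAverage {p : ℂ → ℂ} {r : ℝ} (hr : 0 < r)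
    (hp : DiffContOnCl ℂ p (ball 0 r)) :
    (r ^ 4)⁻¹ + ‖p 0‖ ^ 2 ≤ Real.circleAverage (fun z => ‖p z - (z ^ 2)⁻¹‖ ^ 2) 0 r := by
  set H : ℂ → ℂ := fun z => 2 * conj (p 0) * (p z - p 0) - 2 * (z ^ 2 / r ^ 4) * p z
  have hH : DiffContOnCl ℂ H (ball 0 r) :=
    ((hp.sub_const _).const_smul (2 * conj (p 0))).sub
      ((by fun_prop : Differentiable ℂ fun z : ℂ => 2 * (z ^ 2 / r ^ 4)).diffContOnCl.smul hp)
  have hsphere {G : ℂ → ℂ} (hG : DiffContOnCl ℂ G (ball 0 r)) : ContinuousOn G (sphere 0 r) :=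
    hG.continuousOn_ball.mono sphere_subset_closedBall
  have hH0 : Real.circleAverage (fun z => (H z).re) 0 r = 0 := by
    have hmean : Real.circleAverage H 0 r = 0 := by
      rw [← abs_of_pos hr] at hH
      simpa [H] using hH.circleAverage
    have hcomm := Complex.reCLM.circleAverage_comp_comm ((hsphere hH).circleIntegrable hr.le)
    simpa [hmean, Function.comp_def] using hcomm
  have hre : CircleIntegrable (fun z => (H z).re) 0 r :=
    (Complex.continuous_re.comp_continuousOn (hsphere hH)).circleIntegrable hr.le
  calc (r ^ 4)⁻¹ + ‖p 0‖ ^ 2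
      = Real.circleAverage (fun z => (r ^ 4)⁻¹ + ‖p 0‖ ^ 2 + (H z).re) 0 r := by
        rw [Real.circleAverage_fun_add (circleIntegrable_const _ _ _) hre,
          Real.circleAverage_const, hH0, add_zero]
    _ ≤ Real.circleAverage (fun z => ‖p z - (z ^ 2)⁻¹‖ ^ 2) 0 r := by
        refine Real.circleAverage_mono ((circleIntegrable_const _ _ _).fun_add hre) ?_
          fun z hz => ?_
        · refine ContinuousOn.circleIntegrable hr.le (((hsphere hp).sub ?_).norm.pow 2)
          exact (continuousOn_pow 2).inv₀ fun z hz => pow_ne_zero 2 (ne_of_mem_sphere hz hr.ne')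
        · rw [abs_of_pos hr, mem_sphere_zero_iff_norm] at hz
          subst hz
          exact inv_pow_four_add_norm_sq_add_re_le (norm_pos_iff.1 hr) _ _

theorem le_setIntegral_annulus_norm_sq_sub_inv_sq {p : ℂ → ℂ} {ε ρ R : ℝ}
    (hp : DifferentiableOn ℂ p (ball 0 R)) (hε : 0 < ε) (hερ : ε ≤ ρ) (hρ : ρ < R) :
    π * ((ε ^ 2)⁻¹ - (ρ ^ 2)⁻¹ + ‖p 0‖ ^ 2 * (ρ ^ 2 - ε ^ 2)) ≤
      ∫ z in ball (0 : ℂ) ρ \ closedBall 0 ε, ‖p z - (z ^ 2)⁻¹‖ ^ 2 := by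
  have hpos : ∀ r ∈ Icc ε ρ, 0 < r := fun r hr => hε.trans_le hr.1
  have hcont : ContinuousOn (fun z => ‖p z - (z ^ 2)⁻¹‖ ^ 2) (closedBall 0 ρ \ ball 0 ε) := by
    refine ((hp.continuousOn.mono fun z hz => closedBall_subset_ball hρ hz.1).sub ?_).norm.pow 2
    exact (continuousOn_pow 2).inv₀ fun z hz =>
      pow_ne_zero 2 fun h => hz.2 (h ▸ mem_ball_self hε)
  have havg : ContinuousOn
      (fun r => 2 * π * r * Real.circleAverage (fun z => ‖p z - (z ^ 2)⁻¹‖ ^ 2) 0 r)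
      (Icc ε ρ) := by
    refine ContinuousOn.mul (by fun_prop)
      (Real.ContinuousOn.circleAverage (hcont.mono fun z hz => ?_) fun r hr => (hpos r hr).le)
    simpa [and_comm] using hz
  have hlow : ContinuousOn (fun r : ℝ => 2 * π * r * ((r ^ 4)⁻¹ + ‖p 0‖ ^ 2)) (Icc ε ρ) :=
    .mul (by fun_prop) (.add (.inv₀ (by fun_prop) fun r hr => pow_ne_zero 4 (hpos r hr).ne')
      continuousOn_const)
  rw [setIntegral_annulus_eq_integral_circleAverage hε.le hερ hcont]
  calc π * ((ε ^ 2)⁻¹ - (ρ ^ 2)⁻¹ + ‖p 0‖ ^ 2 * (ρ ^ 2 - ε ^ 2))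
      = ∫ r in ε..ρ, 2 * π * r * ((r ^ 4)⁻¹ + ‖p 0‖ ^ 2) := by
        rw [intervalIntegral.integral_eq_sub_of_hasDerivAt
          (f := fun r => π * (‖p 0‖ ^ 2 * r ^ 2 - (r ^ 2)⁻¹)) (fun r hr => ?_)
          (hlow.intervalIntegrable_of_Icc hερ)]
        · ring
        · have hr0 := (hpos r (uIcc_of_le hερ ▸ hr)).ne'
          refine ((((hasDerivAt_pow 2 r).const_mul _).sub
            ((hasDerivAt_pow 2 r).inv (pow_ne_zero 2 hr0))).const_mul π).congr_deriv ?_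
          field
    _ ≤ ∫ r in ε..ρ, 2 * π * r *
          Real.circleAverage (fun z => ‖p z - (z ^ 2)⁻¹‖ ^ 2) 0 r := by
        refine intervalIntegral.integral_mono_on hερ (hlow.intervalIntegrable_of_Icc hερ)
          (havg.intervalIntegrable_of_Icc hερ) fun r hr => ?_
        have hr0 := hpos r hr
        gcongr
        refine inv_pow_four_add_norm_sq_le_circleAverage hr0 (hp.mono ?_).diffContOnCl
        exact closure_ball_subset_closedBall.trans (closedBall_subset_ball (hr.2.trans_lt hρ))

theorem le_volume_real_image_annulus {q : ℂ → ℂ} {ε ρ R : ℝ}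
    (hq : DifferentiableOn ℂ q (ball 0 R)) (hε : 0 < ε) (hερ : ε ≤ ρ) (hρ : ρ < R)
    (hinj : InjOn (fun z => z⁻¹ + q z) (ball 0 ρ \ closedBall 0 ε)) :
    π * ((ε ^ 2)⁻¹ - (ρ ^ 2)⁻¹ + ‖deriv q 0‖ ^ 2 * (ρ ^ 2 - ε ^ 2)) ≤
      volume.real ((fun z => z⁻¹ + q z) '' (ball 0 ρ \ closedBall 0 ε)) := by
  have hderiv : ∀ z ∈ ball (0 : ℂ) ρ \ closedBall 0 ε, HasDerivWithinAt (fun z => z⁻¹ + q z)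
      (deriv q z - (z ^ 2)⁻¹) (ball 0 ρ \ closedBall 0 ε) z := fun z hz => by
    have hz0 : z ≠ 0 := fun h => hz.2 (h ▸ mem_closedBall_self hε.le)
    have hqz := hq.differentiableAt (isOpen_ball.mem_nhds (ball_subset_ball hρ.le hz.1))
    refine (((hasDerivAt_inv hz0).add hqz.hasDerivAt).congr_deriv ?_).hasDerivWithinAt
    ring
  rw [volume_real_image_eq_integral_norm_sq_deriv
    (measurableSet_ball.diff measurableSet_closedBall) hderiv hinj]
  exact le_setIntegral_annulus_norm_sq_sub_inv_sq (hq.deriv isOpen_ball) hε hερ hρ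

end Area

/-! ### Gronwall's area theorem -/

section Gronwall

/-- The real-linear map `w ↦ w - c * conj w`. With `c = b * ε ^ 2` it maps the ellipse that is the
image of the circle `‖z‖ = ε` under `z⁻¹ + b * z` onto a circle. -/
noncomputable def shear (c : ℂ) : ℂ →L[ℝ] ℂ :=
  .id ℝ ℂ - c • (Complex.conjCLE : ℂ →L[ℝ] ℂ)

theorem shear_apply (c w : ℂ) : shear c w = w - c * conj w := by simp [shear]

theorem det_shear (c : ℂ) : (shear c).det = 1 - ‖c‖ ^ 2 := by
  rw [ContinuousLinearMap.det, ← LinearMap.det_toMatrix Complex.basisOneI, Matrix.det_fin_two]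
  simp [LinearMap.toMatrix_apply, Complex.sq_norm, Complex.normSq_apply, shear_apply]
  ring

theorem norm_shear_le (c w : ℂ) : ‖shear c w‖ ≤ (1 + ‖c‖) * ‖w‖ := by
  calc ‖shear c w‖ ≤ ‖w‖ + ‖c * conj w‖ := shear_apply c w ▸ norm_sub_le _ _
    _ = (1 + ‖c‖) * ‖w‖ := by rw [norm_mul, RCLike.norm_conj]; ring

theorem volume_real_mul_le_of_mapsTo_shear {c a : ℂ} {s : Set ℂ} {M : ℝ} (hM : 0 ≤ M)
    (hs : MapsTo (shear c) s (closedBall a M)) :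
    volume.real s * (1 - ‖c‖ ^ 2) ≤ π * M ^ 2 := by
  calc volume.real s * (1 - ‖c‖ ^ 2) ≤ |(shear c).det| * volume.real s := by
        rw [mul_comm, ← det_shear]
        gcongr
        exact le_abs_self _
    _ = volume.real (shear c '' s) := by
        rw [measureReal_def, measureReal_def, Measure.addHaar_image_continuousLinearMap,
          ENNReal.toReal_mul, ENNReal.toReal_ofReal (abs_nonneg _)]
    _ ≤ volume.real (closedBall a M) :=
        measureReal_mono hs.image_subset measure_closedBall_lt_top.ne
    _ = π * M ^ 2 := by
        simp [measureReal_def, hM, mul_comm]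

theorem norm_shear_inv_add_mul_le {z : ℂ} {ε : ℝ} (hε : 0 < ε) (hz : ε ≤ ‖z‖) (b : ℂ) :
    ‖shear (b * ε ^ 2) (z⁻¹ + b * z)‖ ≤
      (1 - ‖b‖ * ε ^ 2) * ‖z‖⁻¹ + (‖b‖ + ‖b‖ ^ 2 * ε ^ 2) * ‖z‖ := by
  have hz0 : z ≠ 0 := norm_pos_iff.1 (hε.trans_le hz)
  have hsplit : shear (b * ε ^ 2) (z⁻¹ + b * z) =
      z⁻¹ + b * ((‖z‖ ^ 2 - ε ^ 2 : ℝ) * (conj z)⁻¹) - b * ε ^ 2 * (conj b * conj z) := by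
    have hzc : conj z ≠ 0 := by simpa using hz0
    rw [shear_apply, map_add, map_mul, map_inv₀]
    push_cast
    rw [← Complex.mul_conj']
    field
  have hsq : 0 ≤ ‖z‖ ^ 2 - ε ^ 2 := sub_nonneg.2 (by gcongr)
  calc ‖shear (b * ε ^ 2) (z⁻¹ + b * z)‖
      ≤ ‖z⁻¹‖ + ‖b * ((‖z‖ ^ 2 - ε ^ 2 : ℝ) * (conj z)⁻¹)‖ + ‖b * ε ^ 2 * (conj b * conj z)‖ := by
        rw [hsplit]
        exact (norm_sub_le _ _).trans (by gcongr; exact norm_add_le _ _)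
    _ = (1 - ‖b‖ * ε ^ 2) * ‖z‖⁻¹ + (‖b‖ + ‖b‖ ^ 2 * ε ^ 2) * ‖z‖ := by
        simp only [norm_mul, norm_inv, norm_pow, RCLike.norm_conj, Complex.norm_real,
          Real.norm_of_nonneg hε.le, Real.norm_of_nonneg hsq]
        field [norm_ne_zero_iff.2 hz0]

theorem inv_add_mul_add_mul_sq_le {B K ε ρ r : ℝ} (hB : 0 ≤ B) (hK : 0 ≤ K) (hε : 0 < ε)
    (hr : r ∈ Icc ε ρ) (hBε : B * ε ^ 2 ≤ 1) (hερ : ρ⁻¹ + 2 * B * ρ + 2 * K * ρ ^ 2 ≤ ε⁻¹) :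
    (1 - B * ε ^ 2) * r⁻¹ + (B + B ^ 2 * ε ^ 2) * r + 2 * K * r ^ 2 ≤
      ε⁻¹ + B ^ 2 * ε ^ 3 + 2 * K * ε ^ 2 := by
  set ψ : ℝ → ℝ := fun r => (1 - B * ε ^ 2) * r⁻¹ + (B + B ^ 2 * ε ^ 2) * r + 2 * K * r ^ 2
  have hρ : 0 < ρ := hε.trans_le (hr.1.trans hr.2)
  have hinv : ConvexOn ℝ (Ioi 0) fun r : ℝ => r⁻¹ := by simpa using convexOn_zpow (𝕜 := ℝ) (-1)
  have hsq : ConvexOn ℝ (Ioi 0) fun r : ℝ => r ^ 2 :=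
    (convexOn_pow 2).subset Ioi_subset_Ici_self (convex_Ioi 0)
  have hψ : ConvexOn ℝ (Ioi 0) ψ :=
    ((hinv.smul (sub_nonneg.2 hBε)).add ((convexOn_id (convex_Ioi 0)).smul (by positivity))).add
      (hsq.smul (by positivity))
  refine (hψ.le_max_of_mem_Icc hε hρ hr).trans (max_le (le_of_eq ?_) ?_)
  · simp only [ψ]
    field
  · calc ψ ρ ≤ ρ⁻¹ + 2 * B * ρ + 2 * K * ρ ^ 2 := by
          have hfst : (1 - B * ε ^ 2) * ρ⁻¹ ≤ ρ⁻¹ :=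
            mul_le_of_le_one_left (by positivity) (sub_le_self _ (by positivity))
          have hsnd : B * (B * ε ^ 2) * ρ ≤ B * 1 * ρ := by gcongr
          simp only [ψ]
          linarith
      _ ≤ ε⁻¹ + B ^ 2 * ε ^ 3 + 2 * K * ε ^ 2 := by
          have : 0 ≤ B ^ 2 * ε ^ 3 + 2 * K * ε ^ 2 := by positivity
          linarith

theorem norm_shear_inv_add_mul_add_sq_mul_le {b κ z : ℂ} {K ε ρ : ℝ} (hκ : ‖κ‖ ≤ K) (hε : 0 < ε)
    (hz : ‖z‖ ∈ Icc ε ρ) (hbε : ‖b‖ * ε ^ 2 ≤ 1)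
    (hερ : ρ⁻¹ + 2 * ‖b‖ * ρ + 2 * K * ρ ^ 2 ≤ ε⁻¹) :
    ‖shear (b * ε ^ 2) (z⁻¹ + b * z + z ^ 2 * κ)‖ ≤ ε⁻¹ + ‖b‖ ^ 2 * ε ^ 3 + 2 * K * ε ^ 2 := by
  have hK : 0 ≤ K := (norm_nonneg κ).trans hκ
  calc ‖shear (b * ε ^ 2) (z⁻¹ + b * z + z ^ 2 * κ)‖
      ≤ ‖shear (b * ε ^ 2) (z⁻¹ + b * z)‖ + ‖shear (b * ε ^ 2) (z ^ 2 * κ)‖ := by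
        rw [map_add]
        exact norm_add_le _ _
    _ ≤ (1 - ‖b‖ * ε ^ 2) * ‖z‖⁻¹ + (‖b‖ + ‖b‖ ^ 2 * ε ^ 2) * ‖z‖ + 2 * (‖z‖ ^ 2 * K) := by
        gcongr ?_ + ?_
        · exact norm_shear_inv_add_mul_le hε hz.1 b
        · refine (norm_shear_le _ _).trans ?_
          rw [norm_mul (z ^ 2), norm_pow, norm_mul, norm_pow, Complex.norm_real,
            Real.norm_of_nonneg hε.le]
          gcongr
          linarith
    _ ≤ ε⁻¹ + ‖b‖ ^ 2 * ε ^ 3 + 2 * K * ε ^ 2 := by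
        rw [mul_comm _ K, ← mul_assoc]
        exact inv_add_mul_add_mul_sq_le (norm_nonneg b) hK hε hz hbε hερ

theorem eq_add_deriv_mul_add_sq_mul_dslope (q : ℂ → ℂ) (z : ℂ) :
    q z = q 0 + deriv q 0 * z + z ^ 2 * dslope (dslope q 0) 0 z := by
  have hfst := sub_smul_dslope q 0 z
  have hsnd := sub_smul_dslope (dslope q 0) 0 z
  simp only [dslope_same, sub_zero, smul_eq_mul] at hfst hsnd
  linear_combination -hfst - z * hsnd

theorem annulus_area_mul_le {q : ℂ → ℂ} {K ε ρ R : ℝ} (hq : DifferentiableOn ℂ q (ball 0 R))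
    (hinj : InjOn (fun z => z⁻¹ + q z) (ball 0 R \ {0})) (hρ : ρ < R)
    (hK : ∀ z ∈ closedBall (0 : ℂ) ρ, ‖dslope (dslope q 0) 0 z‖ ≤ K) (hε : 0 < ε) (hερ : ε ≤ ρ)
    (hbε : ‖deriv q 0‖ * ε ^ 2 ≤ 1)
    (hsmall : ρ⁻¹ + 2 * ‖deriv q 0‖ * ρ + 2 * K * ρ ^ 2 ≤ ε⁻¹) :
    ((ε ^ 2)⁻¹ - (ρ ^ 2)⁻¹ + ‖deriv q 0‖ ^ 2 * (ρ ^ 2 - ε ^ 2)) * (1 - ‖deriv q 0‖ ^ 2 * ε ^ 4) ≤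
      (ε⁻¹ + ‖deriv q 0‖ ^ 2 * ε ^ 3 + 2 * K * ε ^ 2) ^ 2 := by
  set b := deriv q 0
  set M := ε⁻¹ + ‖b‖ ^ 2 * ε ^ 3 + 2 * K * ε ^ 2
  have hK0 : 0 ≤ K := (norm_nonneg _).trans (hK 0 (mem_closedBall_self (hε.le.trans hερ)))
  have hnorm : ‖b * (ε : ℂ) ^ 2‖ ^ 2 = ‖b‖ ^ 2 * ε ^ 4 := by simp [mul_pow, ← pow_mul]
  have hbε4 : ‖b‖ ^ 2 * ε ^ 4 ≤ 1 := by
    rw [show ‖b‖ ^ 2 * ε ^ 4 = (‖b‖ * ε ^ 2) ^ 2 by ring]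
    exact pow_le_one₀ (by positivity) hbε
  have hmaps : MapsTo (shear (b * ε ^ 2))
      ((fun z => z⁻¹ + q z) '' (ball 0 ρ \ closedBall 0 ε))
      (closedBall (shear (b * ε ^ 2) (q 0)) M) := by
    rintro _ ⟨z, ⟨hzρ, hzε⟩, rfl⟩
    have hz : ‖z‖ ∈ Icc ε ρ :=
      ⟨(not_le.1 (mem_closedBall_zero_iff.not.1 hzε)).le, (mem_ball_zero_iff.1 hzρ).le⟩
    have hexpand : z⁻¹ + q z - q 0 = z⁻¹ + b * z + z ^ 2 * dslope (dslope q 0) 0 z := by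
      rw [eq_add_deriv_mul_add_sq_mul_dslope q z]
      ring
    rw [mem_closedBall_iff_norm, ← map_sub, hexpand]
    exact norm_shear_inv_add_mul_add_sq_mul_le (hK z (ball_subset_closedBall hzρ)) hε hz hbε hsmall
  have hinjA : InjOn (fun z => z⁻¹ + q z) (ball 0 ρ \ closedBall 0 ε) :=
    hinj.mono (sdiff_subset_sdiff (ball_subset_ball hρ.le)
      (singleton_subset_iff.2 (mem_closedBall_self hε.le)))
  have hupper := volume_real_mul_le_of_mapsTo_shear (by positivity) hmaps
  rw [hnorm] at hupper
  refine le_of_mul_le_mul_left ?_ Real.pi_pos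
  rw [← mul_assoc]
  exact (mul_le_mul_of_nonneg_right (le_volume_real_image_annulus hq hε hερ hρ hinjA)
    (sub_nonneg.2 hbε4)).trans hupper

theorem norm_deriv_mul_sq_le_one_of_lt {q : ℂ → ℂ} {ρ R : ℝ} (hq : DifferentiableOn ℂ q (ball 0 R))
    (hinj : InjOn (fun z => z⁻¹ + q z) (ball 0 R \ {0})) (hρ0 : 0 < ρ) (hρ : ρ < R) :
    ‖deriv q 0‖ * ρ ^ 2 ≤ 1 := by
  have hκ : DifferentiableOn ℂ (dslope (dslope q 0) 0) (ball 0 R) := by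
    have hnhds := ball_mem_nhds (0 : ℂ) (hρ0.trans hρ)
    rwa [Complex.differentiableOn_dslope hnhds, Complex.differentiableOn_dslope hnhds]
  obtain ⟨K, hK⟩ := (isCompact_closedBall (0 : ℂ) ρ).exists_bound_of_continuousOn
    (hκ.continuousOn.mono (closedBall_subset_ball hρ))
  set B := ‖deriv q 0‖
  set X := B ^ 2 * ρ ^ 2 - (ρ ^ 2)⁻¹
  -- The two terms `ε⁻²` of `annulus_area_mul_le` cancel.
  have hε : ∀ᶠ ε : ℝ in 𝓝[>] 0, X ≤ 4 * B ^ 2 * ε ^ 2 + X * B ^ 2 * ε ^ 4 - B ^ 4 * ε ^ 6 +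
      4 * K * ε + (B ^ 2 * ε ^ 3 + 2 * K * ε ^ 2) ^ 2 := by
    have hB : ∀ᶠ ε : ℝ in 𝓝[>] 0, B * ε ^ 2 < 1 := by
      have hcont : Continuous fun ε : ℝ => B * ε ^ 2 := by fun_prop
      exact hcont.continuousWithinAt.eventually_lt_const (by simp)
    filter_upwards [Ioo_mem_nhdsGT hρ0, hB,
      tendsto_inv_nhdsGT_zero.eventually_ge_atTop (ρ⁻¹ + 2 * B * ρ + 2 * K * ρ ^ 2)]
      with ε ⟨hε, hερ⟩ hBε hsmall
    have harea := annulus_area_mul_le hq hinj hρ hK hε hερ.le hBε.le hsmall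
    have hinv : ε⁻¹ * ε = 1 := inv_mul_cancel₀ hε.ne'
    have hinvsq : (ε ^ 2)⁻¹ * ε ^ 2 = 1 := inv_mul_cancel₀ (pow_ne_zero 2 hε.ne')
    linear_combination
      harea + B ^ 2 * ε ^ 2 * hinvsq + (2 * B ^ 2 * ε ^ 2 + 4 * K * ε) * hinv
  have hX0 : X ≤ 0 := by
    have hcont : Continuous fun ε : ℝ => 4 * B ^ 2 * ε ^ 2 + X * B ^ 2 * ε ^ 4 - B ^ 4 * ε ^ 6 +
      4 * K * ε + (B ^ 2 * ε ^ 3 + 2 * K * ε ^ 2) ^ 2 := by fun_prop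
    simpa using ge_of_tendsto (hcont.continuousWithinAt (s := Ioi 0) (x := 0)) hε
  refine (sq_le_one_iff₀ (by positivity)).1 ?_
  calc (B * ρ ^ 2) ^ 2 = B ^ 2 * ρ ^ 2 * ρ ^ 2 := by ring
    _ ≤ (ρ ^ 2)⁻¹ * ρ ^ 2 := by gcongr; exact sub_nonpos.1 hX0
    _ = 1 := inv_mul_cancel₀ (by positivity)

theorem norm_deriv_mul_sq_le_one {q : ℂ → ℂ} {R : ℝ} (hR : 0 < R)
    (hq : DifferentiableOn ℂ q (ball 0 R))
    (hinj : InjOn (fun z => z⁻¹ + q z) (ball 0 R \ {0})) : ‖deriv q 0‖ * R ^ 2 ≤ 1 := by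
  have hcont : Continuous fun ρ : ℝ => ‖deriv q 0‖ * ρ ^ 2 := by fun_prop
  refine le_of_tendsto (hcont.continuousWithinAt (s := Iio R)) ?_
  filter_upwards [Ioo_mem_nhdsLT hR] with ρ hρ
  exact norm_deriv_mul_sq_le_one_of_lt hq hinj hρ.1 hρ.2

end Gronwall

/-! ### The theorems of Bieberbach and Koebe -/

section Koebe

theorem exists_differentiableOn_pow_eq {U : Set ℂ} {u : ℂ → ℂ} {n : ℕ} (hUc : IsSimplyConnected U)
    (hU : IsOpen U) (hu : DifferentiableOn ℂ u U) (hne : ∀ z ∈ U, u z ≠ 0) (hn : n ≠ 0) :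
    ∃ s, DifferentiableOn ℂ s U ∧ ∀ z, s z ^ n = u z := by
  obtain ⟨s, hs, hpow⟩ := Complex.exists_continuousOn_pow_eq hUc hU hu.continuousOn
    (by rintro ⟨z, hz, hz0⟩; exact hne z hz hz0) hn
  refine ⟨s, fun z hz => ?_, hpow⟩
  have hsz : s z ≠ 0 := (pow_ne_zero_iff hn).1 (hpow z ▸ hne z hz)
  exact (HasDerivAt.of_comp_left (hs.continuousAt (hU.mem_nhds hz)) (hasDerivAt_pow n (s z))
    (hu.differentiableAt (hU.mem_nhds hz)).hasDerivAt
    (mul_ne_zero (Nat.cast_ne_zero.2 hn) (pow_ne_zero _ hsz))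
    (.of_forall hpow)).differentiableAt.differentiableWithinAt

theorem mapsTo_sq_ball_one : MapsTo (fun z : ℂ => z ^ 2) (ball 0 1) (ball 0 1) := fun z hz => by
  simp only [mem_ball_zero_iff, norm_pow] at hz ⊢
  exact pow_lt_one₀ (norm_nonneg z) hz two_ne_zero

theorem injOn_mul_comp_sq {s : ℂ → ℂ} (hne : ∀ z ∈ ball (0 : ℂ) 1, s z ≠ 0)
    (hinj : InjOn (fun z => z * s z ^ 2) (ball 0 1)) :
    InjOn (fun z => z * s (z ^ 2)) (ball 0 1) := fun z hz w hw hzw => by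
  have hsq : z ^ 2 = w ^ 2 := hinj (mapsTo_sq_ball_one hz) (mapsTo_sq_ball_one hw) (by
    simpa only [← mul_pow] using congrArg (· ^ 2) hzw)
  simp only [hsq] at hzw
  exact mul_right_cancel₀ (hne _ (mapsTo_sq_ball_one hw)) hzw

theorem norm_deriv_le_norm_of_injOn_mul_comp_sq {s : ℂ → ℂ} (hs : DifferentiableOn ℂ s (ball 0 1))
    (hne : ∀ z ∈ ball (0 : ℂ) 1, s z ≠ 0) (hinj : InjOn (fun z => z * s (z ^ 2)) (ball 0 1)) :
    ‖deriv s 0‖ ≤ ‖s 0‖ := by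
  have hnhds : ball (0 : ℂ) 1 ∈ 𝓝 0 := ball_mem_nhds 0 one_pos
  have hs0 := hne 0 (mem_ball_self one_pos)
  set t : ℂ → ℂ := fun z => s 0 / s z with ht
  have htd : DifferentiableOn ℂ t (ball 0 1) := (differentiableOn_const (s 0)).div hs hne
  have hdt : DifferentiableOn ℂ (dslope t 0) (ball 0 1) :=
    (Complex.differentiableOn_dslope hnhds).2 htd
  have hderivt : deriv t 0 = -(deriv s 0 / s 0) := by
    rw [((hasDerivAt_const (0 : ℂ) (s 0)).fun_div (hs.differentiableAt hnhds).hasDerivAt hs0).deriv]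
    field
  set q : ℂ → ℂ := fun z => z * dslope t 0 (z ^ 2)
  have hk : DifferentiableOn ℂ (fun z => dslope t 0 (z ^ 2)) (ball 0 1) :=
    hdt.comp (by fun_prop) mapsTo_sq_ball_one
  have hqd : DifferentiableOn ℂ q (ball 0 1) := differentiableOn_id.mul hk
  have hderivq : deriv q 0 = deriv t 0 := by
    simpa [q] using ((hasDerivAt_id (0 : ℂ)).fun_mul
      (hk.differentiableAt hnhds).hasDerivAt).deriv
  have hq : ∀ z ∈ ball (0 : ℂ) 1 \ {0}, z⁻¹ + q z = s 0 * (z * s (z ^ 2))⁻¹ := fun z hz => by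
    have hz0 : z ≠ 0 := hz.2
    have hslope := sub_smul_dslope t 0 (z ^ 2)
    have ht0 : t 0 = 1 := div_self hs0
    rw [sub_zero, smul_eq_mul, ht0] at hslope
    have hsz := hne _ (mapsTo_sq_ball_one hz.1)
    calc z⁻¹ + q z = z⁻¹ * (1 + z ^ 2 * dslope t 0 (z ^ 2)) := by simp only [q]; field
      _ = s 0 * (z * s (z ^ 2))⁻¹ := by rw [hslope]; simp only [ht]; field
  have hinjq : InjOn (fun z => z⁻¹ + q z) (ball 0 1 \ {0}) := fun z hz w hw hzw => by
    simp only [hq z hz, hq w hw] at hzw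
    exact hinj hz.1 hw.1 (inv_injective (mul_left_cancel₀ hs0 hzw))
  have hgronwall := norm_deriv_mul_sq_le_one one_pos hqd hinjq
  rw [hderivq, hderivt, norm_neg, norm_div, one_pow, mul_one] at hgronwall
  exact (div_le_one (norm_pos_iff.2 hs0)).1 hgronwall

theorem norm_deriv_le_of_injOn_mul_self {u : ℂ → ℂ} (hu : DifferentiableOn ℂ u (ball 0 1))
    (hinj : InjOn (fun z => z * u z) (ball 0 1)) : ‖deriv u 0‖ ≤ 2 * ‖u 0‖ := by
  have h0 : (0 : ℂ) ∈ ball (0 : ℂ) 1 := mem_ball_self one_pos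
  have hnhds : ball (0 : ℂ) 1 ∈ 𝓝 0 := ball_mem_nhds 0 one_pos
  have hne : ∀ z ∈ ball (0 : ℂ) 1, u z ≠ 0 := fun z hz huz => by
    obtain rfl : z = 0 := hinj hz h0 (by simp [huz])
    refine deriv_ne_zero_of_injOn (differentiableOn_id.fun_mul hu) isOpen_ball hinj h0 ?_
    have hderiv := (hasDerivAt_id (0 : ℂ)).fun_mul (hu.differentiableAt hnhds).hasDerivAt
    simpa [huz] using hderiv.deriv
  have : ContractibleSpace (ball (0 : ℂ) 1) := contractibleSpace_ball one_pos
  obtain ⟨s, hs, hsu⟩ := exists_differentiableOn_pow_eq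
    (inferInstance : SimplyConnectedSpace (ball (0 : ℂ) 1)) isOpen_ball hu hne two_ne_zero
  obtain rfl : (fun z => s z ^ 2) = u := funext hsu
  have hsne : ∀ z ∈ ball (0 : ℂ) 1, s z ≠ 0 := fun z hz =>
    (pow_ne_zero_iff two_ne_zero).1 (hne z hz)
  have hroot := norm_deriv_le_norm_of_injOn_mul_comp_sq hs hsne (injOn_mul_comp_sq hsne hinj)
  rw [((hs.differentiableAt hnhds).hasDerivAt.fun_pow 2).deriv]
  calc ‖(2 : ℕ) * s 0 ^ (2 - 1) * deriv s 0‖ = 2 * ‖s 0‖ * ‖deriv s 0‖ := by simp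
    _ ≤ 2 * ‖s 0‖ * ‖s 0‖ := by gcongr
    _ = 2 * ‖s 0 ^ 2‖ := by rw [norm_pow]; ring

theorem norm_deriv_dslope_le {f : ℂ → ℂ} (hf : DifferentiableOn ℂ f (ball 0 1))
    (hinj : InjOn f (ball 0 1)) : ‖deriv (dslope f 0) 0‖ ≤ 2 * ‖deriv f 0‖ := by
  have hslope : ∀ z, z * dslope f 0 z = f z - f 0 := fun z => by simpa using sub_smul_dslope f 0 z
  rw [← dslope_same f 0]
  refine norm_deriv_le_of_injOn_mul_self
    ((Complex.differentiableOn_dslope (ball_mem_nhds 0 one_pos)).2 hf) fun x hx y hy hxy => ?_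
  simp only [hslope] at hxy
  exact hinj hx hy (sub_left_injective hxy)

-- This is Bieberbach's inequality for the injective function `(w - f)⁻¹`.
theorem norm_deriv_dslope_mul_add_sq_le {f : ℂ → ℂ} {w : ℂ} (hf : DifferentiableOn ℂ f (ball 0 1))
    (hinj : InjOn f (ball 0 1)) (hw : w ∉ f '' ball 0 1) :
    ‖deriv (dslope f 0) 0 * (w - f 0) + deriv f 0 ^ 2‖ ≤ 2 * ‖deriv f 0‖ * ‖w - f 0‖ := by
  have hnhds : ball (0 : ℂ) 1 ∈ 𝓝 0 := ball_mem_nhds 0 one_pos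
  have hne : ∀ z ∈ ball (0 : ℂ) 1, w - f z ≠ 0 := fun z hz hwz =>
    hw ⟨z, hz, (sub_eq_zero.1 hwz).symm⟩
  have hne0 := hne 0 (mem_ball_self one_pos)
  have hu := (Complex.differentiableOn_dslope hnhds).2 hf
  have hslope : ∀ z, z * dslope f 0 z = f z - f 0 := fun z => by simpa using sub_smul_dslope f 0 z
  have hinj' : InjOn (fun z => z * (dslope f 0 z / (w - f z))) (ball 0 1) := fun x hx y hy hxy => by
    simp only [← mul_div_assoc, hslope] at hxy
    rw [div_eq_div_iff (hne x hx) (hne y hy)] at hxy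
    refine hinj hx hy (sub_eq_zero.1 ((mul_eq_zero.1 ?_).resolve_left hne0))
    linear_combination hxy
  have hderiv : deriv (fun z => dslope f 0 z / (w - f z)) 0 =
      (deriv (dslope f 0) 0 * (w - f 0) + deriv f 0 ^ 2) / (w - f 0) ^ 2 := by
    rw [((hu.differentiableAt hnhds).hasDerivAt.fun_div
      ((hf.differentiableAt hnhds).hasDerivAt.const_sub w) hne0).deriv, dslope_same]
    ring
  have hbieberbach := norm_deriv_le_of_injOn_mul_self (hu.fun_div (hf.const_sub w) hne) hinj'
  rw [hderiv, dslope_same, norm_div, norm_div, norm_pow,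
    div_le_iff₀ (pow_pos (norm_pos_iff.2 hne0) 2)] at hbieberbach
  refine hbieberbach.trans_eq ?_
  field [norm_ne_zero_iff.2 hne0]

theorem norm_deriv_le_four_mul_norm_sub {f : ℂ → ℂ} {w : ℂ} (hf : DifferentiableOn ℂ f (ball 0 1))
    (hinj : InjOn f (ball 0 1)) (hw : w ∉ f '' ball 0 1) : ‖deriv f 0‖ ≤ 4 * ‖w - f 0‖ := by
  set a := deriv f 0
  set b := deriv (dslope f 0) 0
  set D := w - f 0
  have ha : 0 < ‖a‖ :=
    norm_pos_iff.2 (deriv_ne_zero_of_injOn hf isOpen_ball hinj (mem_ball_self one_pos))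
  have hmul : ‖a‖ * ‖a‖ ≤ 4 * ‖D‖ * ‖a‖ := by
    calc ‖a‖ * ‖a‖ = ‖(b * D + a ^ 2) - b * D‖ := by
          rw [add_sub_cancel_left, norm_pow, sq]
      _ ≤ ‖b * D + a ^ 2‖ + ‖b‖ * ‖D‖ := (norm_sub_le _ _).trans_eq (by rw [norm_mul])
      _ ≤ 2 * ‖a‖ * ‖D‖ + 2 * ‖a‖ * ‖D‖ := by
          gcongr
          · exact norm_deriv_dslope_mul_add_sq_le hf hinj hw
          · exact norm_deriv_dslope_le hf hinj
      _ = 4 * ‖D‖ * ‖a‖ := by ring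
  exact le_of_mul_le_mul_right hmul ha

/-- The Koebe function `z / (1 - c * z) ^ 2`, rotated by `c`. For `‖c‖ ≤ 1` it is injective on the
unit disk, and for `‖c‖ = 1` it maps the disk onto the complement of a half-line. -/
noncomputable def koebeFun (c z : ℂ) : ℂ :=
  z / (1 - c * z) ^ 2

theorem mul_mem_ball_zero_one {c z : ℂ} (hc : ‖c‖ ≤ 1) (hz : z ∈ ball (0 : ℂ) 1) :
    c * z ∈ ball (0 : ℂ) 1 := by
  rw [mem_ball_zero_iff] at hz ⊢
  rw [norm_mul]
  exact mul_lt_one_of_nonneg_of_lt_one_right hc (norm_nonneg z) hz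

theorem one_sub_mul_ne_zero {c z : ℂ} (hc : ‖c‖ ≤ 1) (hz : z ∈ ball (0 : ℂ) 1) :
    1 - c * z ≠ 0 := fun h => by
  simpa [← sub_eq_zero.1 h] using mul_mem_ball_zero_one hc hz

theorem injOn_koebeFun {c : ℂ} (hc : ‖c‖ ≤ 1) : InjOn (koebeFun c) (ball 0 1) :=
    fun x hx y hy hxy => by
  rw [koebeFun, koebeFun, div_eq_div_iff (pow_ne_zero 2 (one_sub_mul_ne_zero hc hx))
    (pow_ne_zero 2 (one_sub_mul_ne_zero hc hy))] at hxy
  have hcxy : 1 - c * x * (c * y) ≠ 0 := one_sub_mul_ne_zero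
    (mem_ball_zero_iff.1 (mul_mem_ball_zero_one hc hx)).le (mul_mem_ball_zero_one hc hy)
  refine sub_eq_zero.1 ((mul_eq_zero.1 ?_).resolve_right hcxy)
  linear_combination hxy

theorem differentiableOn_koebeFun {c : ℂ} (hc : ‖c‖ ≤ 1) :
    DifferentiableOn ℂ (koebeFun c) (ball 0 1) :=
  .fun_div (by fun_prop) (by fun_prop) fun _ hz => pow_ne_zero 2 (one_sub_mul_ne_zero hc hz)

theorem hasDerivAt_koebeFun_zero (c : ℂ) : HasDerivAt (koebeFun c) 1 0 := by
  refine ((hasDerivAt_id (0 : ℂ)).fun_div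
    ((((hasDerivAt_id (0 : ℂ)).const_mul c).const_sub 1).fun_pow 2) (by simp)).congr_deriv ?_
  simp

theorem exists_norm_koebeFun_eq (w : ℂ) :
    ∃ c : ℂ, ‖c‖ = 1 ∧ ‖koebeFun c w‖ = ‖w‖ / (1 + ‖w‖) ^ 2 := by
  obtain ⟨c, hc, hcw⟩ := Complex.exists_norm_eq_mul_self w
  refine ⟨-c, by rwa [norm_neg], ?_⟩
  have hone : 1 - -c * w = ((1 + ‖w‖ : ℝ) : ℂ) := by
    push_cast
    rw [hcw]
    ring
  rw [koebeFun, hone, norm_div, norm_pow, Complex.norm_real, Real.norm_of_nonneg (by positivity)]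

theorem norm_deriv_le_of_mapsTo_ball_of_notMem_image {φ : ℂ → ℂ} {w : ℂ}
    (hφ : DifferentiableOn ℂ φ (ball 0 1)) (hinj : InjOn φ (ball 0 1))
    (hmaps : MapsTo φ (ball 0 1) (ball 0 1)) (hφ0 : φ 0 = 0) (hw : w ∈ ball (0 : ℂ) 1)
    (hwφ : w ∉ φ '' ball 0 1) : ‖deriv φ 0‖ ≤ 4 * ‖w‖ / (1 + ‖w‖) ^ 2 := by
  obtain ⟨c, hc, hcw⟩ := exists_norm_koebeFun_eq w
  have hKinj := injOn_koebeFun hc.le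
  have hderiv : deriv (koebeFun c ∘ φ) 0 = deriv φ 0 := by
    have hφd := (hφ.differentiableAt (ball_mem_nhds 0 one_pos)).hasDerivAt
    have hK : HasDerivAt (koebeFun c) 1 (φ 0) := by rw [hφ0]; exact hasDerivAt_koebeFun_zero c
    rw [(hK.comp 0 hφd).deriv, one_mul]
  have hquarter := norm_deriv_le_four_mul_norm_sub
    ((differentiableOn_koebeFun hc.le).comp hφ hmaps) (hKinj.comp hinj hmaps)
    (w := koebeFun c w) (by
      rintro ⟨z, hz, hzw⟩
      exact hwφ ⟨z, hz, hKinj (hmaps hz) hw hzw⟩)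
  rwa [hderiv, Function.comp_apply, hφ0, show koebeFun c 0 = 0 by simp [koebeFun], sub_zero, hcw,
    ← mul_div_assoc] at hquarter

end Koebe

/-! ### Subordination -/

section Subordination

variable {g h : ℂ → ℂ}

theorem exists_mapsTo_ball_comp_eqOn (hg : DifferentiableOn ℂ g (ball 0 1))
    (hginj : InjOn g (ball 0 1)) (hh : DifferentiableOn ℂ h (ball 0 1))
    (hhg : h '' ball 0 1 ⊆ g '' ball 0 1) (h0 : h 0 = g 0) :
    ∃ φ, DifferentiableOn ℂ φ (ball 0 1) ∧ MapsTo φ (ball 0 1) (ball 0 1) ∧ φ 0 = 0 ∧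
      EqOn (g ∘ φ) h (ball 0 1) ∧ deriv h 0 = deriv g 0 * deriv φ 0 := by
  have hG := hginj.leftInvOn_invFunOn
  set G := Function.invFunOn g (ball 0 1)
  have hhmaps : MapsTo h (ball 0 1) (g '' ball 0 1) := mapsTo_iff_image_subset.2 hhg
  have hφ : DifferentiableOn ℂ (G ∘ h) (ball 0 1) :=
    (differentiableOn_of_leftInvOn hg isOpen_ball hG).comp hh hhmaps
  have hφ0 : (G ∘ h) 0 = 0 := by rw [Function.comp_apply, h0, hG (mem_ball_self one_pos)]
  have hgφ : EqOn (g ∘ G ∘ h) h (ball 0 1) := fun z hz => Function.invFunOn_eq (hhmaps hz)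
  have hnhds : ball (0 : ℂ) 1 ∈ 𝓝 0 := ball_mem_nhds 0 one_pos
  have hgd : HasDerivAt g (deriv g 0) ((G ∘ h) 0) :=
    hφ0.symm ▸ (hg.differentiableAt hnhds).hasDerivAt
  refine ⟨G ∘ h, hφ, fun z hz => Function.invFunOn_mem (hhmaps hz), hφ0, hgφ, ?_⟩
  rw [← (hgd.comp 0 (hφ.differentiableAt hnhds).hasDerivAt).deriv]
  exact (eventuallyEq_of_mem hnhds hgφ).deriv_eq.symm

theorem norm_deriv_le_norm_deriv_of_image_subset (hg : DifferentiableOn ℂ g (ball 0 1))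
    (hginj : InjOn g (ball 0 1)) (hh : DifferentiableOn ℂ h (ball 0 1))
    (hhg : h '' ball 0 1 ⊆ g '' ball 0 1) (h0 : h 0 = g 0) : ‖deriv h 0‖ ≤ ‖deriv g 0‖ := by
  obtain ⟨φ, hφ, hmaps, hφ0, -, hderiv⟩ := exists_mapsTo_ball_comp_eqOn hg hginj hh hhg h0
  rw [hderiv, norm_mul]
  refine mul_le_of_le_one_right (norm_nonneg _)
    (Complex.norm_deriv_le_one_of_mapsTo_ball hφ ?_ one_pos)
  rw [hφ0]
  exact hmaps.mono_right ball_subset_closedBall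

theorem norm_deriv_le_norm_deriv_mul_of_notMem_image {w : ℂ} (hg : DifferentiableOn ℂ g (ball 0 1))
    (hginj : InjOn g (ball 0 1)) (hh : DifferentiableOn ℂ h (ball 0 1))
    (hhinj : InjOn h (ball 0 1)) (hhg : h '' ball 0 1 ⊆ g '' ball 0 1) (h0 : h 0 = g 0)
    (hw : w ∈ ball (0 : ℂ) 1) (hgw : g w ∉ h '' ball 0 1) :
    ‖deriv h 0‖ ≤ ‖deriv g 0‖ * (4 * ‖w‖ / (1 + ‖w‖) ^ 2) := by
  obtain ⟨φ, hφ, hmaps, hφ0, hgφ, hderiv⟩ := exists_mapsTo_ball_comp_eqOn hg hginj hh hhg h0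
  have hφinj : InjOn φ (ball 0 1) := .of_comp (hhinj.congr hgφ.symm)
  rw [hderiv, norm_mul]
  gcongr
  refine norm_deriv_le_of_mapsTo_ball_of_notMem_image hφ hφinj hmaps hφ0 hw ?_
  rintro ⟨z, hz, rfl⟩
  exact hgw ⟨z, hz, (hgφ hz).symm⟩

theorem mul_norm_le_dist_of_ball_subset_image {R : ℝ} {w : ℂ}
    (hg : DifferentiableOn ℂ g (ball 0 1)) (hginj : InjOn g (ball 0 1))
    (hR : ball (g 0) R ⊆ g '' ball 0 1) (hw : w ∈ ball (0 : ℂ) 1) (hgw : g w ∈ ball (g 0) R) :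
    R * ‖w‖ ≤ dist (g w) (g 0) := by
  have hR0 : 0 < R := nonempty_ball.1 ⟨_, hgw⟩
  have hG := hginj.leftInvOn_invFunOn
  set G := Function.invFunOn g (ball 0 1)
  have hG0 : G (g 0) = 0 := hG (mem_ball_self one_pos)
  have hmaps : MapsTo G (ball (g 0) R) (closedBall (G (g 0)) 1) := fun z hz => by
    rw [hG0]
    exact ball_subset_closedBall (Function.invFunOn_mem (hR hz))
  have hschwarz := Complex.dist_le_div_mul_dist_of_mapsTo_ball
    ((differentiableOn_of_leftInvOn hg isOpen_ball hG).mono hR) hmaps hgw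
  rw [hG hw, hG0, dist_zero_right, one_div] at hschwarz
  exact (le_inv_mul_iff₀ hR0).1 hschwarz

theorem monotoneOn_four_mul_div_one_add_sq :
    MonotoneOn (fun x : ℝ => 4 * x / (1 + x) ^ 2) (Icc 0 1) := fun t ht x hx htx => by
  have ht0 : 0 ≤ t := ht.1
  have hx0 : 0 ≤ x := hx.1
  have htx1 : t * x ≤ 1 := mul_le_one₀ ht.2 hx0 hx.2
  simp only
  rw [div_le_div_iff₀ (by positivity) (by positivity)]
  linear_combination 4 * mul_nonneg (sub_nonneg.2 htx) (sub_nonneg.2 htx1)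

theorem norm_deriv_le_norm_deriv_mul_of_dist_le {R : ℝ} {p : ℂ}
    (hg : DifferentiableOn ℂ g (ball 0 1)) (hginj : InjOn g (ball 0 1))
    (hh : DifferentiableOn ℂ h (ball 0 1)) (hhinj : InjOn h (ball 0 1))
    (hhg : h '' ball 0 1 ⊆ g '' ball 0 1) (h0 : h 0 = g 0) (hR : ball (g 0) R ⊆ g '' ball 0 1)
    (hp : p ∉ h '' ball 0 1) (hpR : dist p (g 0) ≤ R) :
    ‖deriv h 0‖ ≤ ‖deriv g 0‖ * (4 * (dist p (g 0) / R) / (1 + dist p (g 0) / R) ^ 2) := by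
  have hp0 : 0 < dist p (g 0) :=
    dist_pos.2 fun hpg => hp ⟨0, mem_ball_self one_pos, h0.trans hpg.symm⟩
  have hR0 : 0 < R := hp0.trans_le hpR
  rcases hpR.eq_or_lt with heq | hlt
  · rw [heq, div_self hR0.ne', show (4 : ℝ) * 1 / (1 + 1) ^ 2 = 1 by norm_num, mul_one]
    exact norm_deriv_le_norm_deriv_of_image_subset hg hginj hh hhg h0
  · obtain ⟨w, hw, rfl⟩ := hR hlt
    have hwx : ‖w‖ ≤ dist (g w) (g 0) / R :=
      (le_div_iff₀' hR0).2 (mul_norm_le_dist_of_ball_subset_image hg hginj hR hw hlt)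
    have hx1 : dist (g w) (g 0) / R ≤ 1 := (div_le_one hR0).2 hpR
    refine (norm_deriv_le_norm_deriv_mul_of_notMem_image hg hginj hh hhinj hhg h0 hw hp).trans ?_
    gcongr ‖deriv g 0‖ * ?_
    exact monotoneOn_four_mul_div_one_add_sq ⟨norm_nonneg w, hwx.trans hx1⟩
      ⟨(norm_nonneg w).trans hwx, hx1⟩ hwx

end Subordination

/-! ### Inner radius -/

section InnerRadius

theorem infDist_frontier_eq_infDist_compl {E : Type*} [NormedAddCommGroup E] [NormedSpace ℝ E]
    [FiniteDimensional ℝ E] {x : E} {s : Set E} (hx : x ∈ s) :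
    infDist x (frontier s) = infDist x sᶜ := by
  rcases eq_or_ne s univ with rfl | hs
  · simp
  obtain ⟨y, hy, hxy⟩ := exists_mem_frontier_infDist_compl_eq_dist hx hs
  refine le_antisymm (hxy ▸ infDist_le_dist_of_mem hy) ?_
  rw [← infDist_closure]
  exact infDist_le_infDist_of_subset (frontier_compl s ▸ frontier_subset_closure) ⟨y, hy⟩

theorem conformal_radius_inner_radius_bound_general {U V : Set ℂ} {g h : ℂ → ℂ} (hVU : V ⊆ U)
    (hg : DifferentiableOn ℂ g (ball 0 1)) (hgU : BijOn g (ball 0 1) U)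
    (hh : DifferentiableOn ℂ h (ball 0 1)) (hhV : BijOn h (ball 0 1) V) (h0 : h 0 = g 0) :
    ‖deriv h 0‖ ≤ ‖deriv g 0‖ *
      (4 * (infDist (g 0) (frontier V) / infDist (g 0) (frontier U)) /
        (1 + infDist (g 0) (frontier V) / infDist (g 0) (frontier U)) ^ 2) := by
  obtain rfl := hgU.image_eq
  obtain rfl := hhV.image_eq
  have hU0 : g 0 ∈ g '' ball 0 1 := mem_image_of_mem g (mem_ball_self one_pos)
  have hV0 : g 0 ∈ h '' ball 0 1 := h0 ▸ mem_image_of_mem h (mem_ball_self one_pos)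
  have hVopen := isOpen_image_of_injOn hh isOpen_ball hhV.injOn
  obtain ⟨p, hp, hpV⟩ := exists_mem_frontier_infDist_compl_eq_dist hV0
    (image_ne_univ_of_injOn hh isOpen_ball hhV.injOn isBounded_ball)
  have hpU : dist p (g 0) ≤ infDist (g 0) (g '' ball 0 1)ᶜ := by
    rw [dist_comm, ← hpV]
    exact infDist_le_infDist_of_subset (compl_subset_compl.2 hVU) (nonempty_compl.2
      (image_ne_univ_of_injOn hg isOpen_ball hgU.injOn isBounded_ball))
  rw [infDist_frontier_eq_infDist_compl hU0, infDist_frontier_eq_infDist_compl hV0, hpV, dist_comm]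
  exact norm_deriv_le_norm_deriv_mul_of_dist_le hg hgU.injOn hh hhV.injOn hVU h0
    ball_infDist_compl_subset (hVopen.frontier_eq ▸ hp).2 hpU

end InnerRadius

end

/-- if `V ⊆ U` are bounded simply connected domains containing
`0`, then with `F(x) = 4x/(1+x)²`, the conformal radii satisfy
`r(V,0) ≤ r(U,0)·F(ρ(V,0)/ρ(U,0))`, where `ρ` denotes the inner radius. -/
theorem conformal_radius_inner_radius_bound
    (U V : Set ℂ)
    (hUbd : Bornology.IsBounded U) (hUopen : IsOpen U) (hUconn : IsConnected U)
    (hUsc : SimplyConnectedSpace U) (hU0 : (0 : ℂ) ∈ U)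
    (hVU : V ⊆ U) (hVopen : IsOpen V) (hVconn : IsConnected V)
    (hVsc : SimplyConnectedSpace V) (hV0 : (0 : ℂ) ∈ V)
    (g h : ℂ → ℂ)
    (hgdiff : DifferentiableOn ℂ g (ball (0 : ℂ) 1))
    (hgbij : Set.BijOn g (ball (0 : ℂ) 1) U) (hg0 : g 0 = 0)
    (hhdiff : DifferentiableOn ℂ h (ball (0 : ℂ) 1))
    (hhbij : Set.BijOn h (ball (0 : ℂ) 1) V) (hh0 : h 0 = 0)
    (ρU ρV : ℝ) (hρU : ρU = infDist 0 (frontier U)) (hρV : ρV = infDist 0 (frontier V))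
    (F : ℝ → ℝ) (hF : ∀ x, F x = 4 * x / (1 + x) ^ 2) :
    ‖deriv h 0‖ ≤ ‖deriv g 0‖ * F (ρV / ρU) := by
  have hbound := conformal_radius_inner_radius_bound_general hVU hgdiff hgbij hhdiff hhbij
    (hh0.trans hg0.symm)
  rwa [hg0, ← hρU, ← hρV, ← hF] at hbound
end

section
/- For each n let U_n ⊊ ℂ be an open, connected, simply connected set with marked point u_n ∈ U_n, and let U ⊊ ℂ be an open, connected, simply connected set with marked point u ∈ U. Let φ_n : 𝔻 → U_n and φ : 𝔻 → U be the biholomorphisms from the open unit disk with φ_n(0) = u_n, φ(0) = u, and with derivatives φ_n′(0) and φ′(0) real and strictly positive. Then the following are equivalent: (1) (U_n, u_n) converges to (U, u) in the kernel (Carathéodory) sense, i.e. u_n → u, for every compact K ⊆ U one has K ⊆ U_n for all sufficiently large n, and for every open connected set W with u ∈ W, if W ⊆ U_n for infinitely many n then W ⊆ U; (2) φ_n converges to φ uniformly on every compact subset of 𝔻. -/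
open Metric Filter

/-!
Suppose `(V i, v i)` converges to `(U, u)`. A disc about `u` lies in `V i` eventually, while some
fixed compact set is eventually not contained in `V i`. So the Riemann map `F i` omits a bounded
value `a i`; a branch of `√(F i - a i)` then omits a disc of definite size, and inversion about its
centre gives bounded functions, from which `F i` is recovered by a rational formula. By the theorems
of Montel and Hurwitz, every ultrafilter of indices carries a locally uniform limit `g` of the
Riemann maps, and `g` is univalent.

On the other hand, if univalent functions converge locally uniformly to a univalent `g`, their
images have kernel `g '' 𝔻`: compact subsets of `g '' 𝔻` persist by Hurwitz' theorem, and a domain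
contained in the images lies in `g '' 𝔻` because the inverse functions form a normal family on it.
This is one of the two implications. It also yields the other one, since kernels are unique and, by
Schwarz' lemma, so are normalized Riemann maps: the limit `g` above is the Riemann map of `(U, u)`.
-/

open Set Function Topology

/-! ### Locally uniform convergence and connectedness -/

theorem tendstoLocallyUniformlyOn_iff_ultrafilter {ι α β : Type*} [TopologicalSpace α]
    [UniformSpace β] {F : ι → α → β} {f : α → β} {l : Filter ι} {s : Set α} :
    TendstoLocallyUniformlyOn F f l s ↔
      ∀ l' : Ultrafilter ι, ↑l' ≤ l → TendstoLocallyUniformlyOn F f l' s := by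
  simp only [tendstoLocallyUniformlyOn_iff_forall_tendsto]
  refine ⟨fun h l' hl x hx => (h x hx).mono_left (prod_mono_left _ hl), fun h x hx => ?_⟩
  refine (tendsto_iff_ultrafilter _ _ _).2 fun g hg => ?_
  have hfst : Tendsto Prod.fst (g : Filter (ι × α)) l := tendsto_fst.mono_left hg
  have hsnd : Tendsto Prod.snd (g : Filter (ι × α)) (𝓝[s] x) := tendsto_snd.mono_left hg
  exact (h (g.map Prod.fst) hfst x hx).mono_left (le_prod.2 ⟨le_rfl, hsnd⟩)

theorem tendsto_prod_nhds_of_tendstoLocallyUniformlyOn {ι α β : Type*}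
    [TopologicalSpace α] [UniformSpace β] {l : Filter ι} {F : ι → α → β} {f : α → β} {U : Set α}
    {z : α} (hF : TendstoLocallyUniformlyOn F f l U) (hU : IsOpen U) (hz : z ∈ U)
    (hf : ContinuousAt f z) :
    Tendsto (fun p : ι × α => F p.1 p.2) (l ×ˢ 𝓝 z) (𝓝 (f z)) :=
  (hf.tendsto.comp tendsto_snd).congr_uniformity
    ((hU.tendstoLocallyUniformlyOn_iff_forall_tendsto).1 hF z hz)

theorem isConnected_thickening {E : Type*} [SeminormedAddCommGroup E] [NormedSpace ℝ E]
    {s : Set E} {δ : ℝ} (hs : IsConnected s) (hδ : 0 < δ) : IsConnected (thickening δ s) := by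
  rw [← add_ball_zero, ← add_image_prod]
  exact (hs.prod ((convex_ball 0 δ).isConnected (nonempty_ball.2 hδ))).image _
    continuous_add.continuousOn

theorem exists_isOpen_isConnected_subset_isCompact {E : Type*} [NormedAddCommGroup E]
    [NormedSpace ℝ E] [ProperSpace E] {U : Set E} {x y : E} (hU : IsOpen U)
    (hUc : IsConnected U) (hx : x ∈ U) (hy : y ∈ U) :
    ∃ W, IsOpen W ∧ IsConnected W ∧ x ∈ W ∧ y ∈ W ∧ ∃ K ⊆ U, IsCompact K ∧ W ⊆ K := by
  have hxy : JoinedIn U x y := (hU.isConnected_iff_isPathConnected.1 hUc).joinedIn x hx y hy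
  have hpath : IsCompact (range hxy.somePath) := isCompact_range hxy.somePath.continuous
  obtain ⟨δ, hδ, hsub⟩ :=
    hpath.exists_cthickening_subset_open hU (range_subset_iff.2 hxy.somePath_mem)
  have hself := self_subset_thickening hδ (range hxy.somePath)
  exact ⟨_, isOpen_thickening,
    isConnected_thickening (isConnected_range hxy.somePath.continuous) hδ,
    hself ⟨0, hxy.somePath.source⟩, hself ⟨1, hxy.somePath.target⟩,
    _, hsub, hpath.cthickening, thickening_subset_cthickening _ _⟩

theorem isSimplyConnected_ball {E : Type*} [SeminormedAddCommGroup E] [NormedSpace ℝ E] {x : E}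
    {r : ℝ} (hr : 0 < r) : IsSimplyConnected (ball x r) := by
  have := (convex_ball x r).contractibleSpace (nonempty_ball.2 hr)
  exact SimplyConnectedSpace.ofContractible (ball x r)

/-! ### Univalent functions -/

/-- A univalent function on `U`: holomorphic and injective there. Its values off `U` are irrelevant,
and `U` need not be open or connected. -/
structure UnivalentOn (f : ℂ → ℂ) (U : Set ℂ) : Prop where
  differentiableOn : DifferentiableOn ℂ f U
  injOn : InjOn f U

theorem eventually_eq_of_deriv_eventually_eq_zero {f : ℂ → ℂ} {z : ℂ} (hf : AnalyticAt ℂ f z)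
    (h : ∀ᶠ w in 𝓝 z, deriv f w = 0) : ∀ᶠ w in 𝓝 z, f w = f z := by
  obtain ⟨r, hr, hball⟩ := Metric.eventually_nhds_iff_ball.1 (h.and hf.eventually_analyticAt)
  filter_upwards [ball_mem_nhds z hr] with w hw
  exact isOpen_ball.is_const_of_deriv_eq_zero (convex_ball z r).isPreconnected
    (fun y hy => (hball y hy).2.differentiableAt.differentiableWithinAt)
    (fun y hy => (hball y hy).1) hw (mem_ball_self hr)

namespace UnivalentOn

variable {f : ℂ → ℂ} {U V : Set ℂ} {z : ℂ}

theorem mono (hf : UnivalentOn f U) (hVU : V ⊆ U) : UnivalentOn f V :=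
  ⟨hf.differentiableOn.mono hVU, hf.injOn.mono hVU⟩

theorem analyticAt (hf : UnivalentOn f U) (hU : U ∈ 𝓝 z) : AnalyticAt ℂ f z :=
  hf.differentiableOn.analyticAt hU

theorem differentiableAt (hf : UnivalentOn f U) (hU : U ∈ 𝓝 z) : DifferentiableAt ℂ f z :=
  hf.differentiableOn.differentiableAt hU

theorem eventually_ne (hf : UnivalentOn f U) (hU : U ∈ 𝓝 z) : ∀ᶠ w in 𝓝[≠] z, f w ≠ f z := by
  filter_upwards [mem_nhdsWithin_of_mem_nhds hU, self_mem_nhdsWithin] with w hw hne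
  exact hf.injOn.ne hw (mem_of_mem_nhds hU) hne

theorem not_eventually_eq (hf : UnivalentOn f U) (hU : U ∈ 𝓝 z) : ¬∀ᶠ w in 𝓝 z, f w = f z :=
  fun h => ((hf.eventually_ne hU).and (h.filter_mono nhdsWithin_le_nhds)).exists.elim
    fun _ hw => hw.1 hw.2

theorem isOpen_image (hf : UnivalentOn f U) (hU : IsOpen U) : IsOpen (f '' U) := by
  rw [isOpen_iff_mem_nhds]
  rintro _ ⟨z, hz, rfl⟩
  have hUz := hU.mem_nhds hz
  exact ((hf.analyticAt hUz).eventually_constant_or_nhds_le_map_nhds.resolve_left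
    (hf.not_eventually_eq hUz)) (image_mem_map hUz)

theorem continuousOn_invFunOn (hf : UnivalentOn f U) (hU : IsOpen U) :
    ContinuousOn (invFunOn f U) (f '' U) := by
  refine IsOpenMap.continuousOn_image_of_leftInvOn (fun s hs => ?_) hf.injOn.leftInvOn_invFunOn
  rw [Set.domRestrict_eq, image_comp]
  exact (hf.mono (Subtype.coe_image_subset U s)).isOpen_image (hU.isOpenMap_subtype_val s hs)

theorem differentiableAt_invFunOn_of_deriv_ne_zero (hf : UnivalentOn f U) (hU : IsOpen U)
    (hz : z ∈ U) (hderiv : deriv f z ≠ 0) : DifferentiableAt ℂ (invFunOn f U) (f z) := by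
  have hfU : f '' U ∈ 𝓝 (f z) := (hf.isOpen_image hU).mem_nhds (mem_image_of_mem f hz)
  have hinv : invFunOn f U (f z) = z := hf.injOn.leftInvOn_invFunOn hz
  refine (HasDerivAt.of_local_left_inverse (f := f) (f' := deriv f z)
    ((hf.continuousOn_invFunOn hU).continuousAt hfU) ?_ hderiv ?_).differentiableAt
  · rw [hinv]
    exact (hf.differentiableAt (hU.mem_nhds hz)).hasDerivAt
  · filter_upwards [hfU] with w hw using invFunOn_eq hw

theorem differentiableOn_invFunOn (hf : UnivalentOn f U) (hU : IsOpen U) :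
    DifferentiableOn ℂ (invFunOn f U) (f '' U) := by
  rintro _ ⟨z, hz, rfl⟩
  have hUz : U ∈ 𝓝 z := hU.mem_nhds hz
  have hfU : f '' U ∈ 𝓝 (f z) := (hf.isOpen_image hU).mem_nhds (mem_image_of_mem f hz)
  have hcont := (hf.continuousOn_invFunOn hU).continuousAt hfU
  have hinv : invFunOn f U (f z) = z := hf.injOn.leftInvOn_invFunOn hz
  have hderiv : ∀ᶠ w in 𝓝[≠] z, deriv f w ≠ 0 :=
    (hf.analyticAt hUz).deriv.eventually_eq_zero_or_eventually_ne_zero.resolve_left fun h =>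
      hf.not_eventually_eq hUz (eventually_eq_of_deriv_eventually_eq_zero (hf.analyticAt hUz) h)
  have htendsto : Tendsto (invFunOn f U) (𝓝[≠] f z) (𝓝[≠] z) := by
    refine tendsto_nhdsWithin_iff.2 ⟨?_, ?_⟩
    · simpa only [hinv] using hcont.tendsto.mono_left nhdsWithin_le_nhds
    · filter_upwards [mem_nhdsWithin_of_mem_nhds hfU, self_mem_nhdsWithin] with w hw hne heq
      exact hne (by rw [mem_singleton_iff, ← invFunOn_eq hw, mem_singleton_iff.1 heq])
  refine (Complex.analyticAt_of_differentiable_on_punctured_nhds_of_continuousAt ?_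
    hcont).differentiableAt.differentiableWithinAt
  filter_upwards [htendsto.eventually hderiv, mem_nhdsWithin_of_mem_nhds hfU] with w hw hwU
  simpa only [invFunOn_eq hwU] using
    hf.differentiableAt_invFunOn_of_deriv_ne_zero hU (invFunOn_mem hwU) hw

theorem deriv_ne_zero (hf : UnivalentOn f U) (hU : IsOpen U) (hz : z ∈ U) : deriv f z ≠ 0 := by
  have hinv := ((hf.differentiableOn_invFunOn hU).differentiableAt
    ((hf.isOpen_image hU).mem_nhds (mem_image_of_mem f hz))).hasDerivAt
  have hcomp := hinv.comp z (hf.differentiableAt (hU.mem_nhds hz)).hasDerivAt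
  have hid : invFunOn f U ∘ f =ᶠ[𝓝 z] id := by
    filter_upwards [hU.mem_nhds hz] with w hw using hf.injOn.leftInvOn_invFunOn hw
  refine right_ne_zero_of_mul (a := deriv (invFunOn f U) (f z)) ?_
  rw [(hcomp.congr_of_eventuallyEq hid.symm).unique (hasDerivAt_id z)]
  exact one_ne_zero

end UnivalentOn

theorem not_eventually_eq_of_image_mem_nhds {f : ℂ → ℂ} {U : Set ℂ} {w z : ℂ}
    (hf : DifferentiableOn ℂ f U) (hU : IsOpen U) (hUc : IsPreconnected U) (hz : z ∈ U)
    (himage : f '' U ∈ 𝓝 w) : ¬∀ᶠ y in 𝓝 z, f y = f z := fun hconst => by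
  have heq : EqOn f (fun _ => f z) U := (hf.analyticOnNhd hU).eqOn_of_preconnected_of_eventuallyEq
    analyticOnNhd_const hUc hz hconst
  refine infinite_of_mem_nhds w himage ((finite_singleton (f z)).subset ?_)
  rintro _ ⟨y, hy, rfl⟩
  exact heq hy

namespace UnivalentOn

variable {f g : ℂ → ℂ} {U : Set ℂ} {c z : ℂ} {r : ℝ}

theorem image_ne_univ_of_isBounded (hf : UnivalentOn f U) (hU : IsOpen U)
    (hb : Bornology.IsBounded U) : f '' U ≠ univ := fun huniv => by
  have himage : ∀ w, w ∈ f '' U := eq_univ_iff_forall.1 huniv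
  have hdiff : Differentiable ℂ (invFunOn f U) := by
    rw [← differentiableOn_univ, ← huniv]
    exact hf.differentiableOn_invFunOn hU
  have hbdd : Bornology.IsBounded (range (invFunOn f U)) :=
    hb.subset (range_subset_iff.2 fun w => invFunOn_mem (himage w))
  have hconst := hdiff.apply_eq_apply_of_bounded hbdd 0 1
  refine zero_ne_one (α := ℂ) ?_
  rw [← invFunOn_eq (himage 0), hconst, invFunOn_eq (himage 1)]

theorem exists_eqOn_comp_of_mapsTo_image (hg : UnivalentOn g U) (hU : IsOpen U)
    (hf : DifferentiableOn ℂ f U) (hmaps : MapsTo f U (g '' U)) (hz : z ∈ U) (hfz : f z = g z) :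
    ∃ ω, DifferentiableOn ℂ ω U ∧ MapsTo ω U U ∧ ω z = z ∧ EqOn f (g ∘ ω) U ∧
      deriv f z = deriv g z * deriv ω z := by
  have hω : DifferentiableOn ℂ (invFunOn g U ∘ f) U :=
    (hg.differentiableOn_invFunOn hU).comp hf hmaps
  have hωz : (invFunOn g U ∘ f) z = z := by
    rw [comp_apply, hfz, hg.injOn.leftInvOn_invFunOn hz]
  have heq : EqOn f (g ∘ invFunOn g U ∘ f) U := fun w hw => (invFunOn_eq (hmaps hw)).symm
  refine ⟨invFunOn g U ∘ f, hω, fun w hw => invFunOn_mem (hmaps hw), hωz, heq, ?_⟩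
  have hUz : U ∈ 𝓝 z := hU.mem_nhds hz
  rw [(heq.eventuallyEq_of_mem hUz).deriv_eq, deriv_comp, hωz]
  · rw [hωz]
    exact hg.differentiableAt hUz
  · exact hω.differentiableAt hUz

theorem norm_deriv_le_of_mapsTo_image_ball (hg : UnivalentOn g (ball c r))
    (hf : DifferentiableOn ℂ f (ball c r)) (hmaps : MapsTo f (ball c r) (g '' ball c r))
    (hfc : f c = g c) (hr : 0 < r) : ‖deriv f c‖ ≤ ‖deriv g c‖ := by
  obtain ⟨ω, hω, hωmaps, hωc, -, hderiv⟩ :=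
    hg.exists_eqOn_comp_of_mapsTo_image isOpen_ball hf hmaps (mem_ball_self hr) hfc
  rw [hderiv, norm_mul]
  refine mul_le_of_le_one_right (norm_nonneg _)
    (Complex.norm_deriv_le_one_of_mapsTo_ball hω ?_ hr)
  rw [hωc]
  exact hωmaps.mono_right ball_subset_closedBall

theorem eqOn_of_mapsTo_image_ball_of_deriv_eq (hg : UnivalentOn g (ball c r))
    (hf : DifferentiableOn ℂ f (ball c r)) (hmaps : MapsTo f (ball c r) (g '' ball c r))
    (hfc : f c = g c) (hr : 0 < r) (hderiv : deriv f c = deriv g c) : EqOn f g (ball c r) := by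
  obtain ⟨ω, hω, hωmaps, hωc, heq, hchain⟩ :=
    hg.exists_eqOn_comp_of_mapsTo_image isOpen_ball hf hmaps (mem_ball_self hr) hfc
  have hωderiv : deriv ω c = 1 :=
    mul_left_cancel₀ (hg.deriv_ne_zero isOpen_ball (mem_ball_self hr))
      (by rw [← hchain, hderiv, mul_one])
  have hωid : EqOn ω id (ball c r) := by
    have haffine := Complex.affine_of_mapsTo_ball_of_norm_dslope_eq_div (R₂ := r) hω
      (by rw [hωc]; exact hωmaps.mono_right ball_subset_closedBall) (mem_ball_self hr)
      (by rw [dslope_same, hωderiv, norm_one, div_self hr.ne'])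
    simpa [hωc, hωderiv, EqOn] using haffine
  intro w hw
  rw [heq hw, comp_apply, hωid hw, id]

end UnivalentOn

/-! ### Hurwitz' theorems -/

theorem ball_subset_image_closedBall_of_le_norm_sub {g : ℂ → ℂ} {z : ℂ} {r ε : ℝ}
    (hg : DiffContOnCl ℂ g (ball z r)) (hr : 0 < r) (hε : 0 < ε)
    (hsphere : ∀ w ∈ sphere z r, ε ≤ ‖g w - g z‖) :
    ball (g z) (ε / 2) ⊆ g '' closedBall z r := by
  refine hg.ball_subset_image_closedBall hr hsphere fun hconst => ?_
  have hball : EqOn g (fun _ => g z) (ball z r) :=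
    (hg.differentiableOn.analyticOnNhd isOpen_ball).eqOn_of_preconnected_of_eventuallyEq
      analyticOnNhd_const (convex_ball z r).isPreconnected (mem_ball_self hr)
      (hconst.mono fun _ => not_not.1)
  have hclosedBall : EqOn g (fun _ => g z) (closedBall z r) :=
    hball.of_subset_closure hg.continuousOn_ball continuousOn_const ball_subset_closedBall
      (closure_ball z hr.ne').ge
  obtain ⟨w, hw⟩ := NormedSpace.sphere_nonempty (x := z).2 hr.le
  have hle := hsphere w hw
  rw [hclosedBall (sphere_subset_closedBall hw), sub_self, norm_zero] at hle
  exact hε.not_ge hle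

theorem exists_closedBall_subset_le_norm_sub {f : ℂ → ℂ} {z : ℂ} {t : Set ℂ}
    (hfan : AnalyticAt ℂ f z) (hf : ¬∀ᶠ w in 𝓝 z, f w = f z) (ht : t ∈ 𝓝 z) :
    ∃ r > 0, closedBall z r ⊆ t ∧ ∃ ε > 0, ∀ w ∈ sphere z r, ε ≤ ‖f w - f z‖ := by
  have hne : ∀ᶠ w in 𝓝[≠] z, f w - f z ≠ 0 :=
    (hfan.sub analyticAt_const).eventually_eq_zero_or_eventually_ne_zero.resolve_left
      fun h => hf (h.mono fun _ => sub_eq_zero.1)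
  obtain ⟨r, hr, hball⟩ := nhds_basis_closedBall.eventually_iff.1
    ((hfan.eventually_continuousAt.and ht).and (eventually_nhdsWithin_iff.1 hne))
  refine ⟨r, hr, fun w hw => (hball hw).1.2, ?_⟩
  refine (isCompact_sphere z r).exists_forall_le' (fun w hw => ?_) fun w hw => norm_pos_iff.2
    ((hball (sphere_subset_closedBall hw)).2 (ne_of_mem_sphere hw hr.ne'))
  exact ((hball (sphere_subset_closedBall hw)).1.1.sub
    continuousAt_const).norm.continuousWithinAt

section Hurwitz

variable {ι : Type*} {l : Filter ι} {F : ι → ℂ → ℂ} {f : ℂ → ℂ} {U K t : Set ℂ} {z : ℂ}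

theorem exists_mem_nhds_eventually_subset_image (hF : TendstoLocallyUniformlyOn F f l U)
    (hFd : ∀ᶠ i in l, DifferentiableOn ℂ (F i) U) (hU : IsOpen U) (hz : z ∈ U)
    (hf : ¬∀ᶠ w in 𝓝 z, f w = f z) (ht : t ∈ 𝓝 z) :
    ∃ s ∈ 𝓝 (f z), ∀ᶠ i in l, s ⊆ F i '' t := by
  rcases l.eq_or_neBot with rfl | _
  · exact ⟨univ, univ_mem, eventually_bot⟩
  have hUz : U ∈ 𝓝 z := hU.mem_nhds hz
  obtain ⟨r, hr, hsub, ε, hε, hsphere⟩ := exists_closedBall_subset_le_norm_sub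
    ((hF.differentiableOn hFd hU).analyticAt hUz) hf (inter_mem ht hUz)
  have hrU : closedBall z r ⊆ U := hsub.trans inter_subset_right
  have hclose := Metric.tendstoUniformlyOn_iff.1 ((tendstoLocallyUniformlyOn_iff_forall_isCompact
    hU).1 hF _ hrU (isCompact_closedBall z r)) (ε / 8) (by positivity)
  refine ⟨ball (f z) (ε / 8), ball_mem_nhds _ (by positivity), ?_⟩
  filter_upwards [hFd, hclose] with i hi hdist
  have hcenter : dist (f z) (F i z) < ε / 8 := hdist z (mem_closedBall_self hr.le)
  have himage : ball (F i z) (ε / 2 / 2) ⊆ F i '' closedBall z r := by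
    refine ball_subset_image_closedBall_of_le_norm_sub (hi.diffContOnCl_ball hrU) hr
      (by positivity) fun w hw => ?_
    have hw' := hdist w (sphere_subset_closedBall hw)
    have htri := dist_triangle4 (f w) (F i w) (F i z) (f z)
    rw [dist_comm (F i z)] at htri
    have hlower := hsphere w hw
    rw [← dist_eq_norm] at hlower ⊢
    linarith
  refine (ball_subset_ball' ?_).trans (himage.trans (image_mono (hsub.trans inter_subset_left)))
  linarith

theorem eventually_subset_image_of_isCompact (hF : TendstoLocallyUniformlyOn F f l U)
    (hFd : ∀ᶠ i in l, DifferentiableOn ℂ (F i) U) (hU : IsOpen U)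
    (hf : ∀ z ∈ U, ¬∀ᶠ w in 𝓝 z, f w = f z) (hK : IsCompact K) (hKf : K ⊆ f '' U) :
    ∀ᶠ i in l, K ⊆ F i '' U := by
  refine hK.induction_on (p := fun s => ∀ᶠ i in l, s ⊆ F i '' U)
    (.of_forall fun _ => empty_subset _) (fun s t hst ht => ht.mono fun _ => hst.trans)
    (fun s t hs ht => (hs.and ht).mono fun _ h => union_subset h.1 h.2) fun w hw => ?_
  obtain ⟨z, hz, rfl⟩ := hKf hw
  obtain ⟨s, hs, hsub⟩ :=
    exists_mem_nhds_eventually_subset_image hF hFd hU hz (hf z hz) (hU.mem_nhds hz)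
  exact ⟨s, mem_nhdsWithin_of_mem_nhds hs, hsub⟩

theorem ne_zero_of_tendstoLocallyUniformlyOn [l.NeBot] (hF : TendstoLocallyUniformlyOn F f l U)
    (hFd : ∀ᶠ i in l, DifferentiableOn ℂ (F i) U) (hU : IsOpen U) (hUc : IsPreconnected U)
    (hF0 : ∀ᶠ i in l, ∀ w ∈ U, F i w ≠ 0) {z₀ : ℂ} (hz₀ : z₀ ∈ U) (hfz₀ : f z₀ ≠ 0) (hz : z ∈ U) :
    f z ≠ 0 := by
  intro hfz
  have hfan : AnalyticOnNhd ℂ f U := (hF.differentiableOn hFd hU).analyticOnNhd hU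
  have hconst : ¬∀ᶠ w in 𝓝 z, f w = f z := fun h =>
    hfz₀ (hfan.eqOn_zero_of_preconnected_of_eventuallyEq_zero hUc hz
      (h.mono fun _ hw => hw.trans hfz) hz₀)
  obtain ⟨s, hs, hsub⟩ :=
    exists_mem_nhds_eventually_subset_image hF hFd hU hz hconst (hU.mem_nhds hz)
  obtain ⟨i, hi, hi0⟩ := (hsub.and hF0).exists
  obtain ⟨w, hw, hw0⟩ := hi (hfz ▸ mem_of_mem_nhds hs)
  exact hi0 w hw hw0

theorem UnivalentOn.of_tendstoLocallyUniformlyOn [l.NeBot]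
    (hF : TendstoLocallyUniformlyOn F f l U) (hFu : ∀ᶠ i in l, UnivalentOn (F i) U)
    (hU : IsOpen U) (hf : ∀ z ∈ U, ¬∀ᶠ w in 𝓝 z, f w = f z) : UnivalentOn f U := by
  have hFd : ∀ᶠ i in l, DifferentiableOn ℂ (F i) U := hFu.mono fun _ h => h.differentiableOn
  refine ⟨hF.differentiableOn hFd hU, fun x hx y hy hxy => by_contra fun hne => ?_⟩
  obtain ⟨tx, ty, htx, hty, hdisj⟩ := t2_separation_nhds hne
  obtain ⟨sx, hsx, hsubx⟩ := exists_mem_nhds_eventually_subset_image hF hFd hU hx (hf x hx)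
    (inter_mem htx (hU.mem_nhds hx))
  obtain ⟨sy, hsy, hsuby⟩ := exists_mem_nhds_eventually_subset_image hF hFd hU hy (hf y hy)
    (inter_mem hty (hU.mem_nhds hy))
  obtain ⟨i, hi, hix, hiy⟩ := (hFu.and (hsubx.and hsuby)).exists
  obtain ⟨a, ⟨hat, haU⟩, ha⟩ := hix (mem_of_mem_nhds hsx)
  obtain ⟨b, ⟨hbt, hbU⟩, hb⟩ := hiy (hxy ▸ mem_of_mem_nhds hsy)
  exact hdisj.ne_of_mem hat hbt (hi.injOn haU hbU (ha.trans hb.symm))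

end Hurwitz

/-! ### Montel's theorem -/

section Montel

variable {ι E F : Type*} [NormedAddCommGroup E] [NormedSpace ℂ E] [NormedAddCommGroup F]
  [NormedSpace ℂ F] {l : Filter ι} {f : ι → E → F} {U : Set E} {z : E} {C : ℝ}

theorem exists_eventually_dist_le_mul_dist (hU : U ∈ 𝓝 z)
    (hf : ∀ᶠ i in l, DifferentiableOn ℂ (f i) U)
    (hbdd : ∀ᶠ p in l ×ˢ 𝓝 z, ‖f p.1 p.2‖ ≤ C) :
    ∃ L, ∀ᶠ p in l ×ˢ 𝓝 z, dist (f p.1 p.2) (f p.1 z) ≤ L * dist p.2 z := by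
  obtain ⟨P, hP, Q, hQ, hPQ⟩ := eventually_prod_iff.1 hbdd
  obtain ⟨r, hr, hball⟩ := Metric.eventually_nhds_iff_ball.1 (hQ.and hU)
  refine ⟨2 * C / r, ?_⟩
  filter_upwards [(hf.and hP).prod_mk (ball_mem_nhds z hr)] with p ⟨⟨hdiff, hp⟩, hpr⟩
  refine Complex.dist_le_div_mul_dist_of_mapsTo_ball
    (hdiff.mono fun w hw => (hball w hw).2) (fun w hw => ?_) hpr
  rw [mem_closedBall, dist_eq_norm, two_mul]
  exact (norm_sub_le _ _).trans
    (add_le_add (hPQ hp (hball w hw).1) (hPQ hp hQ.self_of_nhds))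

theorem exists_tendstoLocallyUniformlyOn [ProperSpace F] {l : Ultrafilter ι} (hU : IsOpen U)
    (hf : ∀ᶠ i in l, DifferentiableOn ℂ (f i) U)
    (hbdd : ∀ z ∈ U, ∃ C, ∀ᶠ p in ↑l ×ˢ 𝓝 z, ‖f p.1 p.2‖ ≤ C) :
    ∃ g, TendstoLocallyUniformlyOn f g l U := by
  have hlim : ∀ z, ∃ y, z ∈ U → Tendsto (f · z) l (𝓝 y) := fun z => by
    by_cases hz : z ∈ U
    · obtain ⟨C, hC⟩ := hbdd z hz
      obtain ⟨y, -, hy⟩ := (isCompact_closedBall (0 : F) C).ultrafilter_le_nhds' (l.map (f · z))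
        (hC.curry.mono fun i hi => mem_closedBall_zero_iff.2 hi.self_of_nhds)
      exact ⟨y, fun _ => hy⟩
    · exact ⟨0, fun h => absurd h hz⟩
  choose g hg using hlim
  refine ⟨g, (hU.tendstoLocallyUniformlyOn_iff_forall_tendsto).2 fun z hz => ?_⟩
  obtain ⟨C, hC⟩ := hbdd z hz
  obtain ⟨L, hL⟩ := exists_eventually_dist_le_mul_dist (hU.mem_nhds hz) hf hC
  have hgL : ∀ᶠ w in 𝓝 z, dist (g w) (g z) ≤ L * dist w z := by
    filter_upwards [(eventually_swap_iff.1 hL).curry, hU.mem_nhds hz] with w hw hwU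
    exact le_of_tendsto ((hg w hwU).dist (hg z hz)) hw
  rw [tendsto_uniformity_iff_dist_tendsto_zero]
  have hdist : Tendsto (fun p : ι × E => dist p.2 z) (↑l ×ˢ 𝓝 z) (𝓝 0) :=
    tendsto_iff_dist_tendsto_zero.1 tendsto_snd
  have hgz : Tendsto (fun p : ι × E => dist (g z) (f p.1 z)) (↑l ×ˢ 𝓝 z) (𝓝 0) := by
    simpa only [comp_def, dist_comm] using
      (tendsto_iff_dist_tendsto_zero.1 (hg z hz)).comp (tendsto_fst (g := 𝓝 z))
  have hbound : Tendsto (fun p : ι × E => L * dist p.2 z + dist (g z) (f p.1 z) + L * dist p.2 z)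
      (↑l ×ˢ 𝓝 z) (𝓝 0) := by
    simpa using ((hdist.const_mul L).add hgz).add (hdist.const_mul L)
  refine squeeze_zero' (.of_forall fun _ => dist_nonneg) ?_ hbound
  filter_upwards [hL, hgL.prod_inr (l : Filter ι)] with p hp hgp
  refine (dist_triangle4 _ (g z) (f p.1 z) _).trans (add_le_add_three hgp le_rfl ?_)
  rwa [dist_comm]

end Montel

theorem mapsTo_ball_of_mapsTo_closedBall {E F : Type*} [NormedAddCommGroup E] [NormedSpace ℂ E]
    [NormedAddCommGroup F] [NormedSpace ℂ F] {f : E → F} {U : Set E} {z₀ : E} {c : F} {r : ℝ}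
    (hU : IsOpen U) (hUc : IsPreconnected U) (hf : DifferentiableOn ℂ f U)
    (hmaps : MapsTo f U (closedBall c r)) (hz₀ : z₀ ∈ U) (hfz₀ : f z₀ ∈ ball c r) :
    MapsTo f U (ball c r) := fun z hz => by
  rw [mem_ball_iff_norm] at hfz₀ ⊢
  refine (mem_closedBall_iff_norm.1 (hmaps hz)).lt_of_ne fun hzr => ?_
  have hmax : IsMaxOn (norm ∘ fun w => f w - c) U z := fun w hw =>
    (mem_closedBall_iff_norm.1 (hmaps hw)).trans hzr.ge
  have heq := Complex.norm_eqOn_of_isPreconnected_of_isMaxOn hUc hU (hf.sub_const c) hz hmax hz₀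
  exact hfz₀.ne (heq.trans hzr)

/-! ### Koebe's square root transform -/

theorem differentiableAt_of_comp_left {p h : ℂ → ℂ} {p' z : ℂ}
    (hp : HasStrictDerivAt p p' (h z)) (hp' : p' ≠ 0) (hh : ContinuousAt h z)
    (hph : DifferentiableAt ℂ (p ∘ h) z) : DifferentiableAt ℂ h z := by
  have hinv : hp.localInverse p p' (h z) hp' ∘ p ∘ h =ᶠ[𝓝 z] h :=
    hh.eventually (hp.eventually_left_inverse hp')
  exact hinv.differentiableAt_iff.1
    ((hp.to_localInverse hp').hasDerivAt.differentiableAt.comp z hph)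

theorem sq_mem_ball_sq {𝕜 : Type*} [NormedField 𝕜] {c w : 𝕜} {δ : ℝ} (hδ : δ ≤ ‖c‖ ^ 2)
    (hw : w ∈ ball c (δ / (3 * ‖c‖))) : w ^ 2 ∈ ball (c ^ 2) δ := by
  rw [mem_ball_iff_norm] at hw ⊢
  have hc : 0 < ‖c‖ := (norm_nonneg c).lt_of_ne fun h0 => by
    rw [← h0, mul_zero, div_zero] at hw
    exact (norm_nonneg _).not_gt hw
  rw [lt_div_iff₀ (by positivity)] at hw
  have hle : 3 * ‖w - c‖ ≤ ‖c‖ := by nlinarith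
  have hsum : ‖w + c‖ ≤ 3 * ‖c‖ := calc
    ‖w + c‖ = ‖w - c + (c + c)‖ := by rw [sub_add_add_cancel]
    _ ≤ ‖w - c‖ + (‖c‖ + ‖c‖) := (norm_add_le _ _).trans (by gcongr; exact norm_add_le _ _)
    _ ≤ 3 * ‖c‖ := by linarith
  calc ‖w ^ 2 - c ^ 2‖ = ‖w - c‖ * ‖w + c‖ := by rw [sq_sub_sq, norm_mul, mul_comm]
    _ ≤ ‖w - c‖ * (3 * ‖c‖) := by gcongr
    _ < δ := hw

section KoebeTransform

variable {f h : ℂ → ℂ} {U : Set ℂ} {z₀ z a : ℂ} {δ : ℝ}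

theorem differentiableOn_sqrt_sub (hf : DifferentiableOn ℂ f U) (hU : IsOpen U)
    (ha : a ∉ f '' U) (hh : ContinuousOn h U) (hsq : ∀ z ∈ U, h z ^ 2 = f z - a) :
    DifferentiableOn ℂ h U := fun z hz => by
  have hne : h z ≠ 0 := fun h0 => ha ⟨z, hz, by simpa [h0, sub_eq_zero, eq_comm] using hsq z hz⟩
  refine (differentiableAt_of_comp_left (hasStrictDerivAt_pow 2 (h z)) (by simpa)
    (hh.continuousAt (hU.mem_nhds hz)) ?_).differentiableWithinAt
  refine ((hf.differentiableAt (hU.mem_nhds hz)).sub_const a).congr_of_eventuallyEq ?_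
  filter_upwards [hU.mem_nhds hz] with w hw using hsq w hw

-- As `f` is injective, `h` never takes both values `w` and `-w`; since its image contains a disc
-- about `h z₀`, it omits the opposite disc.
theorem UnivalentOn.le_mul_norm_sqrt_add (hf : UnivalentOn f U) (hU : IsOpen U) (hz₀ : z₀ ∈ U)
    (hδ : 0 < δ) (hball : ball (f z₀) δ ⊆ f '' U) (ha : a ∉ f '' U)
    (hh : ContinuousOn h U) (hsq : ∀ z ∈ U, h z ^ 2 = f z - a) (hz : z ∈ U) :
    δ ≤ 3 * ‖h z₀‖ * ‖h z + h z₀‖ := by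
  by_contra! hlt
  have hδsq : δ ≤ ‖h z₀‖ ^ 2 := by
    rw [← norm_pow, hsq z₀ hz₀, ← dist_eq_norm, dist_comm]
    exact not_lt.1 fun h => ha (hball h)
  have hc : 0 < ‖h z₀‖ := norm_pos_iff.2 fun h0 => by
    rw [h0, norm_zero, zero_pow two_ne_zero] at hδsq
    exact hδ.not_ge hδsq
  have hη : 0 < δ / (3 * ‖h z₀‖) := by positivity
  have hmaps : MapsTo (fun w => w ^ 2 + a) (ball (h z₀) (δ / (3 * ‖h z₀‖))) (f '' U) := by
    intro w hw
    have hsqball := sq_mem_ball_sq hδsq hw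
    rw [hsq z₀ hz₀, mem_ball_iff_norm, sub_sub_eq_add_sub] at hsqball
    exact hball (mem_ball_iff_norm.2 hsqball)
  have hbranch :
      EqOn (fun w => h (invFunOn f U (w ^ 2 + a))) id (ball (h z₀) (δ / (3 * ‖h z₀‖))) := by
    refine (convex_ball _ _).isPreconnected.eq_of_sq_eq ?_ continuousOn_id (fun w hw => ?_)
      (fun {w} hw (h0 : w = 0) => ha (by simpa [h0] using hmaps hw)) (mem_ball_self hη) ?_
    · exact hh.comp ((hf.continuousOn_invFunOn hU).comp (by fun_prop) hmaps)
        fun w hw => invFunOn_mem (hmaps hw)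
    · simp [hsq _ (invFunOn_mem (hmaps hw)), invFunOn_eq (hmaps hw)]
    · simp [hsq z₀ hz₀, hf.injOn.leftInvOn_invFunOn hz₀]
  have hzball : -h z ∈ ball (h z₀) (δ / (3 * ‖h z₀‖)) := by
    rw [mem_ball_iff_norm, ← norm_neg, neg_sub, sub_neg_eq_add, add_comm,
      lt_div_iff₀ (by positivity)]
    linarith
  have hzneg : h z = -h z := by
    simpa [hsq z hz, hf.injOn.leftInvOn_invFunOn hz] using hbranch hzball
  exact ha ⟨z, hz, sub_eq_zero.1 (by rw [← hsq z hz, self_eq_neg.1 hzneg, zero_pow two_ne_zero])⟩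

-- Here `k = 2 h z₀ / (h + h z₀)` for a branch `h` of `√(f - a)`: unlike `f`, it is bounded.
theorem UnivalentOn.exists_eq_add_mul_two_div_sub_one_sq (hf : UnivalentOn f U) (hU : IsOpen U)
    (hUsc : IsSimplyConnected U) (hz₀ : z₀ ∈ U) (hδ : 0 < δ) (hball : ball (f z₀) δ ⊆ f '' U)
    (ha : a ∉ f '' U) :
    ∃ k : ℂ → ℂ, DifferentiableOn ℂ k U ∧ k z₀ = 1 ∧ ∀ z ∈ U, k z ≠ 0 ∧
      ‖k z‖ ≤ 6 * ‖f z₀ - a‖ / δ ∧ f z = a + (f z₀ - a) * (2 / k z - 1) ^ 2 := by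
  have h0 : (0 : ℂ) ∉ (fun z => f z - a) '' U := by
    rintro ⟨z, hz, hza⟩
    exact ha ⟨z, hz, sub_eq_zero.1 hza⟩
  obtain ⟨h, hh, hsq : ∀ z, h z ^ 2 = f z - a⟩ := Complex.exists_continuousOn_pow_eq hUsc hU
    (hf.differentiableOn.continuousOn.sub continuousOn_const) h0 two_ne_zero
  have hlower : ∀ z ∈ U, δ ≤ 3 * ‖h z₀‖ * ‖h z + h z₀‖ := fun z hz =>
    hf.le_mul_norm_sqrt_add hU hz₀ hδ hball ha hh (fun w _ => hsq w) hz
  have hsum : ∀ z ∈ U, h z + h z₀ ≠ 0 := fun z hz h0 =>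
    (hlower z hz).not_gt (by rwa [h0, norm_zero, mul_zero])
  have hc : h z₀ ≠ 0 := fun h0 => hsum z₀ hz₀ (by rw [h0, add_zero])
  refine ⟨fun z => 2 * h z₀ / (h z + h z₀), ?_, ?_, fun z hz => ⟨?_, ?_, ?_⟩⟩
  · exact (differentiableOn_const _).div
      ((differentiableOn_sqrt_sub hf.differentiableOn hU ha hh fun z _ => hsq z).add_const _) hsum
  · simp only [← two_mul, div_self (mul_ne_zero two_ne_zero hc)]
  · exact div_ne_zero (mul_ne_zero two_ne_zero hc) (hsum z hz)
  · simp only [← hsq]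
    rw [norm_div, norm_mul, norm_pow, Complex.norm_ofNat,
      div_le_div_iff₀ (norm_pos_iff.2 (hsum z hz)) hδ]
    nlinarith [mul_le_mul_of_nonneg_left (hlower z hz) (norm_nonneg (h z₀))]
  · have hk : 2 / (2 * h z₀ / (h z + h z₀)) - 1 = h z / h z₀ := by field_simp; ring
    rw [hk, ← hsq, div_pow, mul_div_cancel₀ _ (pow_ne_zero 2 hc), hsq, add_sub_cancel]

end KoebeTransform

section Normality

variable {ι : Type*} {l : Ultrafilter ι} {F : ι → ℂ → ℂ} {U K : Set ℂ} {z₀ p : ℂ} {δ : ℝ}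

theorem exists_tendstoLocallyUniformlyOn_of_tendsto_notMem_image (hU : IsOpen U)
    (hUsc : IsSimplyConnected U) (hz₀ : z₀ ∈ U) (hF : ∀ᶠ i in l, UnivalentOn (F i) U)
    (hp : Tendsto (F · z₀) l (𝓝 p)) (hδ : 0 < δ) (hball : ∀ᶠ i in l, ball (F i z₀) δ ⊆ F i '' U)
    {a : ι → ℂ} {b : ℂ} (hab : Tendsto a l (𝓝 b)) (ha : ∀ᶠ i in l, a i ∉ F i '' U) :
    ∃ f, TendstoLocallyUniformlyOn F f l U := by
  obtain ⟨k, hk⟩ := ((hF.and (hball.and ha)).mono fun i hi =>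
    hi.1.exists_eq_add_mul_two_div_sub_one_sq hU hUsc hz₀ hδ hi.2.1 hi.2.2).choice
  have hkd : ∀ᶠ i in l, DifferentiableOn ℂ (k i) U := hk.mono fun i hi => hi.1
  have hkbdd : ∀ z ∈ U, ∃ C, ∀ᶠ q in ↑l ×ˢ 𝓝 z, ‖k q.1 q.2‖ ≤ C := fun z hz => by
    refine ⟨6 * (‖p - b‖ + 1) / δ, ?_⟩
    filter_upwards [(hk.and ((hp.sub hab).norm.eventually_le_const (lt_add_one _))).prod_mk
      (hU.mem_nhds hz)] with q hq
    exact ((hq.1.1.2.2 q.2 hq.2).2.1).trans (by have := hq.1.2; gcongr)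
  obtain ⟨κ, hκ⟩ := exists_tendstoLocallyUniformlyOn hU hkd hkbdd
  have hκd : DifferentiableOn ℂ κ U := hκ.differentiableOn hkd hU
  have hκz₀ : κ z₀ = 1 := tendsto_nhds_unique (hκ.tendsto_at hz₀)
    (tendsto_const_nhds.congr' (hk.mono fun i hi => hi.2.1.symm))
  have hκ0 : ∀ z ∈ U, κ z ≠ 0 := fun z hz =>
    ne_zero_of_tendstoLocallyUniformlyOn hκ hkd hU hUsc.isPathConnected.isConnected.isPreconnected
      (hk.mono fun i hi w hw => (hi.2.2 w hw).1) hz₀ (hκz₀ ▸ one_ne_zero) hz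
  refine exists_tendstoLocallyUniformlyOn hU (hF.mono fun i hi => hi.differentiableOn)
    fun z hz => ?_
  have hk_tendsto := tendsto_prod_nhds_of_tendstoLocallyUniformlyOn hκ hU hz
    (hκd.continuousOn.continuousAt (hU.mem_nhds hz))
  have hFz : Tendsto (fun q : ι × ℂ => F q.1 q.2) (↑l ×ˢ 𝓝 z)
      (𝓝 (b + (p - b) * (2 / κ z - 1) ^ 2)) := by
    refine Tendsto.congr' ?_ ((hab.comp tendsto_fst).add (((hp.sub hab).comp tendsto_fst).mul
      (((tendsto_const_nhds.div hk_tendsto (hκ0 z hz)).sub_const 1).pow 2)))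
    filter_upwards [hk.prod_mk (hU.mem_nhds hz)] with q hq
    exact (hq.1.2.2 q.2 hq.2).2.2.symm
  exact ⟨_, hFz.norm.eventually_le_const (lt_add_one _)⟩

theorem exists_tendstoLocallyUniformlyOn_of_not_subset_image (hU : IsOpen U)
    (hUsc : IsSimplyConnected U) (hz₀ : z₀ ∈ U) (hF : ∀ᶠ i in l, UnivalentOn (F i) U)
    (hp : Tendsto (F · z₀) l (𝓝 p)) (hδ : 0 < δ) (hball : ∀ᶠ i in l, ball (F i z₀) δ ⊆ F i '' U)
    (hK : IsCompact K) (homit : ∀ᶠ i in l, ¬K ⊆ F i '' U) :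
    ∃ f, TendstoLocallyUniformlyOn F f l U := by
  obtain ⟨a, ha⟩ := (homit.mono fun i hi => not_subset.1 hi).choice
  obtain ⟨b, -, hab⟩ := hK.ultrafilter_le_nhds' (l.map a) (ha.mono fun i hi => hi.1)
  exact exists_tendstoLocallyUniformlyOn_of_tendsto_notMem_image hU hUsc hz₀ hF hp hδ hball hab
    (ha.mono fun i hi => hi.2)

end Normality

/-! ### Kernel convergence -/

/-- Kernel (Carathéodory) convergence of the pointed domains `(V i, v i)` to `(U, u)` along the
filter `l`, with no requirement that `V i` and `U` be domains or contain the marked points. -/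
structure KernelConverges {ι : Type*} (l : Filter ι) (V : ι → Set ℂ) (v : ι → ℂ) (U : Set ℂ)
    (u : ℂ) : Prop where
  tendsto : Tendsto v l (𝓝 u)
  eventually_subset : ∀ K ⊆ U, IsCompact K → ∀ᶠ i in l, K ⊆ V i
  subset_of_frequently : ∀ W, IsOpen W → IsConnected W → u ∈ W → (∃ᶠ i in l, W ⊆ V i) → W ⊆ U

namespace KernelConverges

variable {ι : Type*} {l : Filter ι} {V : ι → Set ℂ} {v : ι → ℂ} {U U' : Set ℂ} {u : ℂ}

theorem mono {l' : Filter ι} (h : KernelConverges l V v U u) (hl : l' ≤ l) :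
    KernelConverges l' V v U u :=
  ⟨h.tendsto.mono_left hl, fun K hKU hK => (h.eventually_subset K hKU hK).filter_mono hl,
    fun W hW hWc hu hfreq => h.subset_of_frequently W hW hWc hu (hfreq.filter_mono hl)⟩

theorem subset [l.NeBot] (h : KernelConverges l V v U u) (h' : KernelConverges l V v U' u)
    (hU : IsOpen U) (hUc : IsConnected U) (hu : u ∈ U) : U ⊆ U' := fun z hz => by
  obtain ⟨W, hW, hWc, huW, hzW, K, hKU, hK, hWK⟩ :=
    exists_isOpen_isConnected_subset_isCompact hU hUc hu hz
  have hWV : ∀ᶠ i in l, W ⊆ V i := (h.eventually_subset K hKU hK).mono fun _ => hWK.trans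
  exact h'.subset_of_frequently W hW hWc huW hWV.frequently hzW

theorem exists_eventually_ball_subset (h : KernelConverges l V v U u) (hU : IsOpen U)
    (hu : u ∈ U) : ∃ δ > 0, ∀ᶠ i in l, ball (v i) δ ⊆ V i := by
  obtain ⟨ρ, hρ, hsub⟩ := nhds_basis_closedBall.mem_iff.1 (hU.mem_nhds hu)
  refine ⟨ρ / 2, half_pos hρ, ?_⟩
  filter_upwards [h.eventually_subset _ hsub (isCompact_closedBall u ρ),
    h.tendsto (ball_mem_nhds u (half_pos hρ))] with i hi hvi
  refine (ball_subset_ball' ?_).trans (ball_subset_closedBall.trans hi)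
  have : dist (v i) u < ρ / 2 := hvi
  linarith

theorem exists_eventually_not_closedBall_subset (h : KernelConverges l V v U u)
    (hU : U ≠ univ) : ∃ R, ∀ᶠ i in l, ¬closedBall u R ⊆ V i := by
  obtain ⟨b, hb⟩ := (ne_univ_iff_exists_notMem U).1 hU
  have hR : 0 < dist b u + 1 := by positivity
  refine ⟨dist b u + 1, not_frequently.1 fun hfreq => hb ?_⟩
  exact h.subset_of_frequently (ball u (dist b u + 1)) isOpen_ball
    ((convex_ball u _).isConnected (nonempty_ball.2 hR)) (mem_ball_self hR)
    (hfreq.mono fun _ => ball_subset_closedBall.trans) (mem_ball.2 (lt_add_one _))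

end KernelConverges

section Image

variable {ι : Type*} {f : ℂ → ℂ} {W : Set ℂ} {c z₀ : ℂ} {r : ℝ}

theorem subset_image_of_eventually_subset_image {l : Ultrafilter ι} {F : ι → ℂ → ℂ}
    (hF : TendstoLocallyUniformlyOn F f l (ball c r))
    (hFu : ∀ᶠ i in l, UnivalentOn (F i) (ball c r)) (hz₀ : z₀ ∈ ball c r) (hW : IsOpen W)
    (hWc : IsPreconnected W) (hfz₀ : f z₀ ∈ W) (hsub : ∀ᶠ i in l, W ⊆ F i '' ball c r) :
    W ⊆ f '' ball c r := by
  have hfc : ContinuousOn f (ball c r) := (hF.differentiableOn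
    (hFu.mono fun i hi => hi.differentiableOn) isOpen_ball).continuousOn
  set inv : ι → ℂ → ℂ := fun i => invFunOn (F i) (ball c r)
  have hinvd : ∀ᶠ i in l, DifferentiableOn ℂ (inv i) W := by
    filter_upwards [hFu, hsub] with i hi hiW
    exact (hi.differentiableOn_invFunOn isOpen_ball).mono hiW
  have hinvmem : ∀ᶠ i in l, MapsTo (inv i) W (ball c r) :=
    hsub.mono fun i hi w hw => invFunOn_mem (hi hw)
  obtain ⟨g, hg⟩ := exists_tendstoLocallyUniformlyOn hW hinvd fun w hw =>
    ⟨‖c‖ + r, (hinvmem.prod_mk (hW.mem_nhds hw)).mono fun p hp =>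
      (norm_lt_of_mem_ball (hp.1 hp.2)).le⟩
  have hgd : DifferentiableOn ℂ g W := hg.differentiableOn hinvd hW
  have hgz₀ : g (f z₀) = z₀ := by
    refine tendsto_nhds_unique (hg.tendsto_comp (hgd.continuousOn _ hfz₀) hfz₀
      (tendsto_nhdsWithin_iff.2 ⟨hF.tendsto_at hz₀, ?_⟩)) (tendsto_const_nhds.congr' ?_)
    · exact (hF.tendsto_at hz₀).eventually (hW.mem_nhds hfz₀)
    · filter_upwards [hFu] with i hi using (hi.injOn.leftInvOn_invFunOn hz₀).symm
  have hgball : MapsTo g W (ball c r) := by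
    refine mapsTo_ball_of_mapsTo_closedBall hW hWc hgd (fun w hw => ?_) hfz₀ (by rwa [hgz₀])
    exact isClosed_closedBall.mem_of_tendsto (hg.tendsto_at hw)
      (hinvmem.mono fun i hi => ball_subset_closedBall (hi hw))
  intro w hw
  refine ⟨g w, hgball hw, tendsto_nhds_unique (hF.tendsto_comp (hfc _ (hgball hw)) (hgball hw)
    (tendsto_nhdsWithin_iff.2 ⟨hg.tendsto_at hw, hinvmem.mono fun i hi => hi hw⟩))
    (tendsto_const_nhds.congr' ?_)⟩
  filter_upwards [hsub] with i hi using (invFunOn_eq (hi hw)).symm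

theorem kernelConverges_image {l : Filter ι} {F : ι → ℂ → ℂ}
    (hF : TendstoLocallyUniformlyOn F f l (ball c r))
    (hFu : ∀ᶠ i in l, UnivalentOn (F i) (ball c r)) (hf : UnivalentOn f (ball c r)) (hr : 0 < r) :
    KernelConverges l (fun i => F i '' ball c r) (F · c) (f '' ball c r) (f c) where
  tendsto := hF.tendsto_at (mem_ball_self hr)
  eventually_subset K hKf hK := eventually_subset_image_of_isCompact hF
    (hFu.mono fun i hi => hi.differentiableOn) isOpen_ball
    (fun z hz => hf.not_eventually_eq (isOpen_ball.mem_nhds hz)) hK hKf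
  subset_of_frequently W hW hWc hcW hfreq := by
    have : (l ⊓ 𝓟 {i | W ⊆ F i '' ball c r}).NeBot := frequently_mem_iff_neBot.1 hfreq
    obtain ⟨l', hl'⟩ := Ultrafilter.exists_le (l ⊓ 𝓟 {i | W ⊆ F i '' ball c r})
    obtain ⟨hl, hsub⟩ := le_inf_iff.1 hl'
    exact subset_image_of_eventually_subset_image
      (tendstoLocallyUniformlyOn_iff_ultrafilter.1 hF l' hl) (hFu.filter_mono hl)
      (mem_ball_self hr) hW hWc.isPreconnected hcW (le_principal_iff.1 hsub)

end Image

theorem KernelConverges.exists_univalentOn_tendstoLocallyUniformlyOn {ι : Type*}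
    {l : Ultrafilter ι} {F : ι → ℂ → ℂ} {U : Set ℂ} {c u : ℂ} {r : ℝ}
    (h : KernelConverges l (fun i => F i '' ball c r) (F · c) U u)
    (hF : ∀ᶠ i in l, UnivalentOn (F i) (ball c r)) (hr : 0 < r) (hU : IsOpen U) (hu : u ∈ U)
    (hUne : U ≠ univ) :
    ∃ f, UnivalentOn f (ball c r) ∧ TendstoLocallyUniformlyOn F f l (ball c r) := by
  have hc : c ∈ ball c r := mem_ball_self hr
  obtain ⟨δ, hδ, hball⟩ := h.exists_eventually_ball_subset hU hu
  obtain ⟨R, homit⟩ := h.exists_eventually_not_closedBall_subset hUne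
  obtain ⟨f, hf⟩ := exists_tendstoLocallyUniformlyOn_of_not_subset_image isOpen_ball
    (isSimplyConnected_ball hr) hc hF h.tendsto hδ hball (isCompact_closedBall u R) homit
  have hfd : DifferentiableOn ℂ f (ball c r) :=
    hf.differentiableOn (hF.mono fun i hi => hi.differentiableOn) isOpen_ball
  have hfc : f c = u := tendsto_nhds_unique (hf.tendsto_at hc) h.tendsto
  obtain ⟨ρ, hρ, hsub⟩ := nhds_basis_closedBall.mem_iff.1 (hU.mem_nhds hu)
  have hsubf : ball u ρ ⊆ f '' ball c r :=
    subset_image_of_eventually_subset_image hf hF hc isOpen_ball (convex_ball u ρ).isPreconnected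
      (hfc ▸ mem_ball_self hρ) ((h.eventually_subset _ hsub (isCompact_closedBall u ρ)).mono
        fun i hi => ball_subset_closedBall.trans hi)
  exact ⟨f, .of_tendstoLocallyUniformlyOn hf hF isOpen_ball fun z hz =>
    not_eventually_eq_of_image_mem_nhds hfd isOpen_ball (convex_ball c r).isPreconnected hz
      (mem_of_superset (ball_mem_nhds u hρ) hsubf), hf⟩

/-! ### Normalized Riemann maps -/

open scoped ComplexOrder in
/-- A Riemann map of the pointed domain `(U, u)`: a biholomorphism `f : 𝔻 → U` with `f 0 = u` and
`f' 0 > 0`, in the order of `ℂ` in which positive numbers are real. -/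
structure IsNormalizedRiemannMap (f : ℂ → ℂ) (U : Set ℂ) (u : ℂ) : Prop where
  univalentOn : UnivalentOn f (ball 0 1)
  image_eq : f '' ball 0 1 = U
  map_zero : f 0 = u
  deriv_pos : 0 < deriv f 0

namespace IsNormalizedRiemannMap

variable {f g : ℂ → ℂ} {U : Set ℂ} {u : ℂ}

theorem of_bijOn (hf : DifferentiableOn ℂ f (ball 0 1)) (hbij : BijOn f (ball 0 1) U)
    (hu : f 0 = u) (hderiv : (deriv f 0).im = 0 ∧ 0 < (deriv f 0).re) :
    IsNormalizedRiemannMap f U u :=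
  ⟨⟨hf, hbij.injOn⟩, hbij.image_eq, hu, Complex.pos_iff.2 ⟨hderiv.2, hderiv.1.symm⟩⟩

theorem isOpen (hf : IsNormalizedRiemannMap f U u) : IsOpen U :=
  hf.image_eq ▸ hf.univalentOn.isOpen_image isOpen_ball

theorem isConnected (hf : IsNormalizedRiemannMap f U u) : IsConnected U :=
  hf.image_eq ▸ ((convex_ball 0 1).isConnected (nonempty_ball.2 one_pos)).image f
    hf.univalentOn.differentiableOn.continuousOn

theorem mem (hf : IsNormalizedRiemannMap f U u) : u ∈ U :=
  hf.image_eq ▸ ⟨0, mem_ball_self one_pos, hf.map_zero⟩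

theorem ne_univ (hf : IsNormalizedRiemannMap f U u) : U ≠ univ :=
  hf.image_eq ▸ hf.univalentOn.image_ne_univ_of_isBounded isOpen_ball isBounded_ball

theorem mapsTo (hf : IsNormalizedRiemannMap f U u) : MapsTo f (ball 0 1) U :=
  mapsTo_iff_image_subset.2 hf.image_eq.subset

theorem norm_deriv_le (hf : IsNormalizedRiemannMap f U u) (hg : IsNormalizedRiemannMap g U u) :
    ‖deriv f 0‖ ≤ ‖deriv g 0‖ :=
  hg.univalentOn.norm_deriv_le_of_mapsTo_image_ball hf.univalentOn.differentiableOn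
    (hg.image_eq ▸ hf.mapsTo) (hf.map_zero.trans hg.map_zero.symm) one_pos

open scoped ComplexOrder in
theorem eqOn (hf : IsNormalizedRiemannMap f U u) (hg : IsNormalizedRiemannMap g U u) :
    EqOn f g (ball 0 1) := by
  refine hg.univalentOn.eqOn_of_mapsTo_image_ball_of_deriv_eq hf.univalentOn.differentiableOn
    (hg.image_eq ▸ hf.mapsTo) (hf.map_zero.trans hg.map_zero.symm) one_pos ?_
  rw [Complex.eq_coe_norm_of_nonneg hf.deriv_pos.le, Complex.eq_coe_norm_of_nonneg hg.deriv_pos.le,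
    (hf.norm_deriv_le hg).antisymm (hg.norm_deriv_le hf)]

open scoped ComplexOrder in
theorem of_tendstoLocallyUniformlyOn {ι : Type*} {l : Filter ι} [l.NeBot] {F : ι → ℂ → ℂ}
    {V : ι → Set ℂ} {v : ι → ℂ} (hF : TendstoLocallyUniformlyOn F f l (ball 0 1))
    (hFn : ∀ᶠ i in l, IsNormalizedRiemannMap (F i) (V i) (v i)) (hf : UnivalentOn f (ball 0 1)) :
    IsNormalizedRiemannMap f (f '' ball 0 1) (f 0) where
  univalentOn := hf
  image_eq := rfl
  map_zero := rfl
  deriv_pos := by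
    have h0 : (0 : ℂ) ∈ ball (0 : ℂ) 1 := mem_ball_self one_pos
    have hderiv := (hF.deriv (hFn.mono fun i hi => hi.univalentOn.differentiableOn)
      isOpen_ball).tendsto_at h0
    exact (ge_of_tendsto hderiv (hFn.mono fun i hi => hi.deriv_pos.le)).lt_of_ne'
      (hf.deriv_ne_zero isOpen_ball h0)

end IsNormalizedRiemannMap

section Caratheodory

variable {ι : Type*} {V : ι → Set ℂ} {v : ι → ℂ} {U : Set ℂ} {u : ℂ} {F : ι → ℂ → ℂ}
  {f : ℂ → ℂ}

theorem KernelConverges.tendstoLocallyUniformlyOn {l : Ultrafilter ι}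
    (h : KernelConverges l V v U u) (hF : ∀ i, IsNormalizedRiemannMap (F i) (V i) (v i))
    (hf : IsNormalizedRiemannMap f U u) : TendstoLocallyUniformlyOn F f l (ball 0 1) := by
  obtain rfl : (fun i => F i '' ball 0 1) = V := funext fun i => (hF i).image_eq
  obtain rfl : (F · 0) = v := funext fun i => (hF i).map_zero
  have hFu : ∀ᶠ i in l, UnivalentOn (F i) (ball 0 1) := .of_forall fun i => (hF i).univalentOn
  obtain ⟨g, hg, hFg⟩ := h.exists_univalentOn_tendstoLocallyUniformlyOn hFu one_pos
    hf.isOpen hf.mem hf.ne_univ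
  have hgn := IsNormalizedRiemannMap.of_tendstoLocallyUniformlyOn hFg (.of_forall hF) hg
  obtain rfl : g 0 = u := tendsto_nhds_unique (hFg.tendsto_at (mem_ball_self one_pos)) h.tendsto
  have hgker := kernelConverges_image hFg hFu hg one_pos
  obtain rfl : g '' ball 0 1 = U := (hgker.subset h hgn.isOpen hgn.isConnected hgn.mem).antisymm
    (h.subset hgker hf.isOpen hf.isConnected hf.mem)
  exact hFg.congr_right (hgn.eqOn hf)

theorem caratheodory_kernel_theorem_general {l : Filter ι}
    (hF : ∀ i, IsNormalizedRiemannMap (F i) (V i) (v i)) (hf : IsNormalizedRiemannMap f U u) :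
    KernelConverges l V v U u ↔ TendstoLocallyUniformlyOn F f l (ball 0 1) := by
  refine ⟨fun h => tendstoLocallyUniformlyOn_iff_ultrafilter.2 fun l' hl' =>
    (h.mono hl').tendstoLocallyUniformlyOn hF hf, fun h => ?_⟩
  simpa only [(hF _).image_eq, (hF _).map_zero, hf.image_eq, hf.map_zero] using
    kernelConverges_image h (.of_forall fun i => (hF i).univalentOn) hf.univalentOn one_pos

end Caratheodory

/-- Carathéodory kernel theorem: for pointed simply connected
domains, kernel convergence `(Uₙ, uₙ) → (U, u)` is equivalent to uniform
convergence on compact subsets of `𝔻` of the normalized Riemann maps. -/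
theorem caratheodory_kernel_theorem
    (Un : ℕ → Set ℂ) (un : ℕ → ℂ) (U : Set ℂ) (u : ℂ)
    (hUnopen : ∀ n, IsOpen (Un n)) (hUnconn : ∀ n, IsConnected (Un n))
    (hUnsc : ∀ n, SimplyConnectedSpace (Un n)) (hUnproper : ∀ n, Un n ≠ Set.univ)
    (hun : ∀ n, un n ∈ Un n)
    (hUopen : IsOpen U) (hUconn : IsConnected U) (hUsc : SimplyConnectedSpace U)
    (hUproper : U ≠ Set.univ) (hu : u ∈ U)
    (φn : ℕ → ℂ → ℂ) (φ : ℂ → ℂ)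
    (hφndiff : ∀ n, DifferentiableOn ℂ (φn n) (ball (0 : ℂ) 1))
    (hφnbij : ∀ n, Set.BijOn (φn n) (ball (0 : ℂ) 1) (Un n))
    (hφn0 : ∀ n, φn n 0 = un n)
    (hφnderiv : ∀ n, (deriv (φn n) 0).im = 0 ∧ 0 < (deriv (φn n) 0).re)
    (hφdiff : DifferentiableOn ℂ φ (ball (0 : ℂ) 1))
    (hφbij : Set.BijOn φ (ball (0 : ℂ) 1) U)
    (hφ0 : φ 0 = u)
    (hφderiv : (deriv φ 0).im = 0 ∧ 0 < (deriv φ 0).re) :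
    (Tendsto un atTop (nhds u) ∧
        (∀ K : Set ℂ, K ⊆ U → IsCompact K → ∀ᶠ n in atTop, K ⊆ Un n) ∧
        (∀ W : Set ℂ, IsOpen W → IsConnected W → u ∈ W →
          (∃ᶠ n in atTop, W ⊆ Un n) → W ⊆ U)) ↔
      (∀ K : Set ℂ, K ⊆ ball (0 : ℂ) 1 → IsCompact K →
        TendstoUniformlyOn (fun n => φn n) φ atTop K) := by
  have hφ : IsNormalizedRiemannMap φ U u := .of_bijOn hφdiff hφbij hφ0 hφderiv
  have hφn : ∀ n, IsNormalizedRiemannMap (φn n) (Un n) (un n) := fun n =>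
    .of_bijOn (hφndiff n) (hφnbij n) (hφn0 n) (hφnderiv n)
  rw [← tendstoLocallyUniformlyOn_iff_forall_isCompact isOpen_ball,
    ← caratheodory_kernel_theorem_general hφn hφ]
  exact ⟨fun ⟨hlim, hK, hW⟩ => ⟨hlim, hK, hW⟩,
    fun h => ⟨h.tendsto, h.eventually_subset, h.subset_of_frequently⟩⟩
end

section
/- Let p and q be coprime natural numbers with 1 ≤ p < q. Then there exists a unique strictly increasing function x : Fin q → ℝ with x i ∈ [0, 1) for every i, such that for every i ∈ Fin q, Int.fract(2 · x i) = x (i + p), where i + p denotes addition modulo q in Fin q. (Equivalently: the angle-doubling map D(t) = 2t mod 1 on ℝ/ℤ has exactly one periodic orbit of period q whose points, listed in increasing cyclic order, are permuted by D as the rotation by p/q.) -/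
/-!
The orbit is written down explicitly. If its `a`-th point has binary digits
`⌊(a + (n + 1) p) / q⌋ - ⌊(a + n p) / q⌋`, the digits dictated by the rotation by `p / q`, then
summation by parts gives the point `θ a = ∑ n, ⌊(a + n p) / q⌋ / 2 ^ (n + 1)`. This formula makes
sense for every `a : ℕ` and satisfies `θ (a + q) = θ a + 1` and `2 θ a = ⌊a / q⌋ + θ (a + p)`, so
doubling acts as `a ↦ a + p` modulo `q`. It is increasing because each floor is, strictly so because
by coprimality some `a + 1 + n p` is divisible by `q`.

Conversely, the cyclic order forces the integer part of `2 x i` for any such orbit `x`, and a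
function on a finite set is determined by an expanding affine recursion.
-/

/-- The lift to `ℕ` of the orbit of rotation number `p / q` under angle doubling: its value at
`a < q` is the `a`-th point of the orbit in `[0, 1)`, and `a ↦ a + q` adds one full turn. The
division by `q` is that of `ℕ`, i.e. the floor of the quotient. -/
noncomputable def rotationOrbit (p q a : ℕ) : ℝ :=
  ∑' n : ℕ, ((a + n * p) / q : ℕ) / 2 ^ (n + 1)

section RotationOrbit

variable {p q : ℕ}

theorem summable_rotationOrbit (p q a : ℕ) :
    Summable fun n : ℕ ↦ (((a + n * p) / q : ℕ) : ℝ) / 2 ^ (n + 1) := by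
  have hconst : Summable fun n : ℕ ↦ (a : ℝ) / 2 / 2 ^ n := summable_geometric_two' a
  have hlinear : Summable fun n : ℕ ↦ (p : ℝ) / 2 * ((n : ℝ) ^ 1 * (1 / 2) ^ n) :=
    (summable_pow_mul_geometric_of_norm_lt_one 1 (r := (1 / 2 : ℝ)) (by norm_num)).mul_left _
  refine Summable.of_nonneg_of_le (fun n ↦ by positivity) (fun n ↦ ?_) (hconst.add hlinear)
  calc (((a + n * p) / q : ℕ) : ℝ) / 2 ^ (n + 1)
      ≤ ((a + n * p : ℕ) : ℝ) / 2 ^ (n + 1) := by gcongr; exact Nat.div_le_self _ _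
    _ = (a : ℝ) / 2 / 2 ^ n + (p : ℝ) / 2 * ((n : ℝ) ^ 1 * (1 / 2) ^ n) := by
      rw [Nat.cast_add, Nat.cast_mul, pow_one, one_div_pow, pow_succ]; ring

theorem rotationOrbit_nonneg (p q a : ℕ) : 0 ≤ rotationOrbit p q a :=
  tsum_nonneg fun _ ↦ by positivity

theorem two_mul_rotationOrbit (p q a : ℕ) :
    2 * rotationOrbit p q a = (a / q : ℕ) + rotationOrbit p q (a + p) := by
  have hshift (n : ℕ) : (((a + (n + 1) * p) / q : ℕ) : ℝ) / 2 ^ (n + 1 + 1) =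
      (((a + p + n * p) / q : ℕ) : ℝ) / 2 ^ (n + 1) / 2 := by
    rw [pow_succ _ (n + 1), div_div, add_one_mul, add_right_comm, add_assoc]
  rw [rotationOrbit, (summable_rotationOrbit p q a).tsum_eq_zero_add]
  simp only [hshift, tsum_div_const, zero_mul, add_zero, zero_add, pow_one]
  rw [mul_add, mul_div_cancel₀ _ two_ne_zero, mul_div_cancel₀ _ two_ne_zero, rotationOrbit]

theorem rotationOrbit_add_mul (hq : 0 < q) (p a k : ℕ) :
    rotationOrbit p q (a + k * q) = rotationOrbit p q a + k := by
  have hterm (n : ℕ) : (((a + k * q + n * p) / q : ℕ) : ℝ) / 2 ^ (n + 1) =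
      (((a + n * p) / q : ℕ) : ℝ) / 2 ^ (n + 1) + k / 2 / 2 ^ n := by
    rw [add_right_comm, Nat.add_mul_div_right _ _ hq, Nat.cast_add, add_div, pow_succ', div_div]
  simp only [rotationOrbit, hterm]
  rw [(summable_rotationOrbit p q a).tsum_add (summable_geometric_two' _), tsum_geometric_two']

theorem rotationOrbit_eq_div_add_mod (hq : 0 < q) (p a : ℕ) :
    rotationOrbit p q a = (a / q : ℕ) + rotationOrbit p q (a % q) := by
  rw [add_comm, ← rotationOrbit_add_mul hq, Nat.mod_add_div']

theorem two_mul_rotationOrbit_of_lt {a : ℕ} (ha : a < q) (p : ℕ) :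
    2 * rotationOrbit p q a = ((a + p) / q : ℕ) + rotationOrbit p q ((a + p) % q) := by
  rw [two_mul_rotationOrbit, Nat.div_eq_of_lt ha, Nat.cast_zero, zero_add,
    rotationOrbit_eq_div_add_mod (a.zero_le.trans_lt ha)]

theorem exists_dvd_add_mul_of_coprime (hcop : p.Coprime q) (hq : 0 < q) (a : ℕ) :
    ∃ n, q ∣ a + n * p := by
  obtain ⟨N, hNp, hNq⟩ := Nat.chineseRemainder hcop 0 (a * (q - 1))
  obtain ⟨n, rfl⟩ := Nat.modEq_zero_iff_dvd.mp hNp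
  refine ⟨n, Nat.modEq_zero_iff_dvd.mp ?_⟩
  calc a + n * p ≡ a + a * (q - 1) [MOD q] := by rw [mul_comm n]; exact hNq.add_left a
    _ = a * q := by rw [← mul_one_add, Nat.add_sub_cancel' (Nat.one_le_of_lt hq)]
    _ ≡ 0 [MOD q] := Nat.modEq_zero_iff_dvd.mpr (dvd_mul_left q a)

theorem strictMono_rotationOrbit (hcop : p.Coprime q) (hq : 0 < q) :
    StrictMono (rotationOrbit p q) := by
  refine strictMono_nat_of_lt_succ fun a ↦ ?_
  obtain ⟨n, hn⟩ := exists_dvd_add_mul_of_coprime hcop hq (a + 1)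
  have hjump : (a + n * p) / q < (a + 1 + n * p) / q := by
    rw [add_right_comm] at hn ⊢
    rw [Nat.succ_div_of_dvd hn]
    exact Nat.lt_succ_self _
  refine (summable_rotationOrbit p q a).tsum_lt_tsum (i := n) (fun m ↦ ?_) ?_
    (summable_rotationOrbit p q (a + 1))
  · gcongr
    exact a.le_succ
  · gcongr

theorem rotationOrbit_lt_one (hcop : p.Coprime q) (hp : 0 < p) (hpq : p < q) {a : ℕ}
    (ha : a < q) : rotationOrbit p q a < 1 := by
  have hmono := strictMono_rotationOrbit hcop (hp.trans hpq)
  have hlast : 2 * rotationOrbit p q (q - 1) = rotationOrbit p q (p - 1) + 1 := by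
    have hwrap : q - 1 + p = p - 1 + 1 * q := by omega
    rw [two_mul_rotationOrbit, Nat.div_eq_of_lt (by omega), hwrap,
      rotationOrbit_add_mul (hp.trans hpq), Nat.cast_zero, Nat.cast_one, zero_add]
  have hlt : rotationOrbit p q (p - 1) < rotationOrbit p q (q - 1) := hmono (by omega)
  have hle : rotationOrbit p q a ≤ rotationOrbit p q (q - 1) := hmono.monotone (by omega)
  linarith

end RotationOrbit

theorem floor_lt_floor_of_fract_lt_fract {R : Type*} [Ring R] [LinearOrder R] [FloorRing R]
    [IsStrictOrderedRing R] {s t : R} (hst : s < t) (hfract : Int.fract t < Int.fract s) :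
    ⌊s⌋ < ⌊t⌋ := by
  rw [← Int.floor_add_fract s, ← Int.floor_add_fract t] at hst
  exact_mod_cast lt_of_add_lt_add_right (hst.trans (add_lt_add_right hfract _))

theorem floor_two_mul_eq_div {p q : ℕ} (hp : 0 < p) (hpq : p < q) {x : Fin q → ℝ}
    (hmono : StrictMono x) (hmem : ∀ i, x i ∈ Set.Ico (0 : ℝ) 1)
    (hrot : ∀ i : Fin q, Int.fract (2 * x i) = x ⟨(i + p) % q, Nat.mod_lt _ (by omega)⟩)
    (i : Fin q) : ⌊2 * x i⌋ = ((i + p) / q : ℕ) := by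
  have hnonneg (j : Fin q) : 0 ≤ ⌊2 * x j⌋ := Int.floor_nonneg.mpr (by linarith [(hmem j).1])
  have hlt_two (j : Fin q) : ⌊2 * x j⌋ < 2 :=
    Int.floor_lt.mpr (by push_cast; linarith [(hmem j).2])
  have hjump {j k : Fin q} (hjk : j < k) (hwrap : (k + p) % q < (j + p) % q) :
      ⌊2 * x j⌋ < ⌊2 * x k⌋ := by
    refine floor_lt_floor_of_fract_lt_fract (by linarith [hmono hjk]) ?_
    rw [hrot, hrot]
    exact hmono hwrap
  rcases lt_or_ge (i + p : ℕ) q with hi | hi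
  · have hlast : ⌊2 * x i⌋ < ⌊2 * x ⟨q - 1, by omega⟩⌋ := by
      refine hjump (Fin.lt_def.mpr (by dsimp only; omega)) ?_
      rw [Nat.mod_eq_of_lt hi, Nat.mod_eq_sub_mod (by dsimp only; omega), Nat.mod_eq_of_lt]
      all_goals dsimp only; omega
    rw [Nat.div_eq_of_lt hi]
    have := hnonneg i
    have := hlt_two ⟨q - 1, by omega⟩
    omega
  · have hfirst : ⌊2 * x ⟨0, by omega⟩⌋ < ⌊2 * x i⌋ := by
      refine hjump (Fin.lt_def.mpr (by dsimp only; omega)) ?_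
      rw [Nat.mod_eq_sub_mod hi, Nat.mod_eq_of_lt (by omega), zero_add, Nat.mod_eq_of_lt hpq]
      omega
    rw [Nat.div_eq_of_lt_le (k := 1) (by omega) (by omega)]
    have := hnonneg ⟨0, by omega⟩
    have := hlt_two i
    omega

theorem eq_of_smul_eq_add_comp {ι 𝕜 E : Type*} [Finite ι] [NormedField 𝕜] [NormedAddCommGroup E]
    [NormedSpace 𝕜 E] {c : 𝕜} (hc : 1 < ‖c‖) {s : ι → ι} {d x y : ι → E}
    (hx : ∀ i, c • x i = d i + x (s i)) (hy : ∀ i, c • y i = d i + y (s i)) : x = y := by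
  funext i
  have : Nonempty ι := ⟨i⟩
  obtain ⟨m, hm⟩ := Finite.exists_max fun j ↦ ‖x j - y j‖
  have hexpand : ‖c‖ * ‖x m - y m‖ = ‖x (s m) - y (s m)‖ := by
    rw [← norm_smul, smul_sub, hx, hy, add_sub_add_left_eq_sub]
  have hzero : ‖x m - y m‖ ≤ 0 := by nlinarith [hm (s m), norm_nonneg (x m - y m)]
  exact sub_eq_zero.mp (norm_le_zero_iff.mp ((hm i).trans hzero))

/-- for coprime `1 ≤ p < q`, the angle-doubling map
`t ↦ 2t mod 1` has a unique periodic orbit of period `q` whose points, listed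
in increasing order in `[0,1)`, are permuted as the rotation by `p/q`. -/
theorem doubling_unique_rotation_orbit (p q : ℕ) (hcop : Nat.Coprime p q)
    (hp : 1 ≤ p) (hpq : p < q) :
    ∃! x : Fin q → ℝ, StrictMono x ∧ (∀ i, x i ∈ Set.Ico (0 : ℝ) 1) ∧
      ∀ i : Fin q, Int.fract (2 * x i) = x ⟨((i : ℕ) + p) % q, Nat.mod_lt _ (by omega)⟩ := by
  have hq : 0 < q := by omega
  have hmem (a : ℕ) (ha : a < q) : rotationOrbit p q a ∈ Set.Ico (0 : ℝ) 1 :=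
    ⟨rotationOrbit_nonneg p q a, rotationOrbit_lt_one hcop hp hpq ha⟩
  refine ⟨fun i ↦ rotationOrbit p q i, ⟨?_, fun i ↦ hmem i i.isLt, fun i ↦ ?_⟩, ?_⟩
  · exact (strictMono_rotationOrbit hcop hq).comp Fin.val_strictMono
  · rw [two_mul_rotationOrbit_of_lt i.isLt, Int.fract_natCast_add]
    exact Int.fract_eq_self.mpr (hmem _ (Nat.mod_lt _ hq))
  · rintro y ⟨hmono, hIco, hrot⟩
    refine eq_of_smul_eq_add_comp (c := (2 : ℝ)) (by norm_num)
      (s := fun i : Fin q ↦ ⟨(i + p) % q, Nat.mod_lt _ hq⟩) (d := fun i ↦ (((i + p) / q : ℕ) : ℝ))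
      (fun i ↦ ?_) fun i ↦ two_mul_rotationOrbit_of_lt i.isLt p
    rw [smul_eq_mul, ← hrot, ← Int.cast_natCast (R := ℝ),
      ← floor_two_mul_eq_div hp hpq hmono hIco hrot, Int.floor_add_fract]
end

section
/- Let θ ∈ (0,1) be irrational. Define θ_1 = θ and θ_{n+1} = Int.fract(1/θ_n) for n ≥ 1 (each θ_n lies in (0,1) and is irrational), and let q_n denote the denominators of the continued fraction convergents p_n/q_n of θ. Then the series Σ_{n≥1} θ_1·θ_2···θ_{n−1}·log(1/θ_n) (with empty product equal to 1 for n = 1) converges if and only if the series Σ_{n≥1} log(q_{n+1})/q_n converges. -/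
/-!
Let `βₙ = θ₁ ⋯ θₙ`, so that `log (1 / θₙ₊₁) = log βₙ - log βₙ₊₁`. The identity
`qₙ₊₁ βₙ₊₁ + qₙ βₙ₊₂ = 1` together with the monotonicity of `q` and `β` pins `βₙ qₙ` between `1 / 2`
and `1`. Hence `βₙ log (1 / θₙ₊₁)` may be replaced by `qₙ⁻¹ log (1 / θₙ₊₁)`, and this differs from
`log qₙ₊₁ / qₙ` by `O(1 / qₙ) - log qₙ / qₙ`, which is summable since `q` grows at least as fast as
the Fibonacci numbers.
-/

open Asymptotics Filter Finset Real

section Growth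

theorem isBigO_one_log_sub_log_of_isTheta {α : Type*} {l : Filter α} {f g : α → ℝ}
    (hfg : f =Θ[l] g) (hf : ∀ᶠ x in l, f x ≠ 0) :
    (fun x ↦ log (f x) - log (g x)) =O[l] (fun _ ↦ (1 : ℝ)) := by
  obtain ⟨c, hc, hfg_le⟩ := hfg.1.exists_pos
  obtain ⟨d, hd, hgf_le⟩ := hfg.2.exists_pos
  refine IsBigO.of_bound (max (log c) (log d)) ?_
  filter_upwards [hfg_le.bound, hgf_le.bound, hf] with x hfx hgx hf0
  have hg0 : g x ≠ 0 := fun h ↦ hf0 (by simpa [h] using hfx)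
  have log_le {a b k : ℝ} (hk : 0 < k) (ha : a ≠ 0) (hb : b ≠ 0) (h : ‖a‖ ≤ k * ‖b‖) :
      log a - log b ≤ log k := by
    rw [sub_le_iff_le_add, ← log_abs a, ← log_abs b, ← log_mul hk.ne' (abs_ne_zero.2 hb)]
    exact log_le_log (abs_pos.2 ha) h
  rw [norm_one, mul_one, norm_eq_abs]
  exact abs_sub_le_iff.2 ⟨(log_le hc hf0 hg0 hfx).trans (le_max_left _ _),
    (log_le hd hg0 hf0 hgx).trans (le_max_right _ _)⟩

variable {u : ℕ → ℝ} {r : ℝ}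

theorem summable_inv_of_pow_isBigO (hr : 1 < r) (hu : (fun n ↦ r ^ n) =O[atTop] u) :
    Summable fun n ↦ (u n)⁻¹ := by
  refine summable_of_isBigO_nat
    (summable_geometric_of_lt_one (by positivity) (inv_lt_one_of_one_lt₀ hr)) ?_
  simpa only [inv_pow] using hu.inv_rev
    (.of_forall fun n h ↦ absurd h (pow_pos (one_pos.trans hr) n).ne')

theorem summable_log_div_of_pow_isBigO (hr : 1 < r) (hu : (fun n ↦ r ^ n) =O[atTop] u) :
    Summable fun n ↦ log (u n) / u n := by
  have hr0 : 0 < r := one_pos.trans hr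
  have abs_tendsto : Tendsto (fun n ↦ |u n|) atTop atTop :=
    hu.trans_tendsto_norm_atTop <|
      tendsto_norm_atTop_atTop.comp (tendsto_pow_atTop_atTop_of_one_lt hr)
  have log_le_sqrt : (fun n ↦ log (u n)) =O[atTop] fun n ↦ √|u n| := by
    simpa only [Function.comp_def, log_abs, ← sqrt_eq_rpow] using
      ((isLittleO_log_rpow_atTop one_half_pos).comp_tendsto abs_tendsto).isBigO
  have sqrt_pow_le : (fun n ↦ √r ^ n) =O[atTop] fun n ↦ √|u n| := by
    simpa only [sqrt_eq_rpow, ← rpow_natCast, ← rpow_mul hr0.le, mul_comm] using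
      hu.abs_right.rpow one_half_pos.le (.of_forall fun n ↦ abs_nonneg (u n))
  have log_div_le : (fun n ↦ log (u n) / u n) =O[atTop] fun n ↦ (√|u n|)⁻¹ := by
    refine (log_le_sqrt.mul (isBigO_refl (fun n ↦ (u n)⁻¹) _)).trans (.of_norm_le fun n ↦ ?_)
    rw [norm_mul, norm_inv, norm_of_nonneg (sqrt_nonneg _), norm_eq_abs, ← div_eq_mul_inv,
      sqrt_div_self]
  have hsqrt : 1 < √r := by rwa [lt_sqrt one_pos.le, one_pow]
  exact summable_of_isBigO_nat (summable_inv_of_pow_isBigO hsqrt sqrt_pow_le) log_div_le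

theorem summable_mul_log_div_iff {β Q : ℕ → ℝ} (hβQ : β =Θ[atTop] fun n ↦ (Q n)⁻¹)
    (hβ : ∀ n, β n ≠ 0) (hinv : Summable fun n ↦ (Q n)⁻¹)
    (hlog : Summable fun n ↦ log (Q n) / Q n) :
    Summable (fun n ↦ β n * log (β n / β (n + 1))) ↔
      Summable fun n ↦ log (Q (n + 1)) / Q n := by
  rw [(hβQ.mul (isTheta_refl (fun n ↦ log (β n / β (n + 1))) _)).summable_iff_nat]
  refine summable_iff_of_summable_sub ?_
  set w : ℕ → ℝ := fun n ↦ log (β n) + log (Q n)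
  have hw : w =O[atTop] (fun _ ↦ (1 : ℝ)) := by
    simpa only [log_inv, sub_neg_eq_add] using
      isBigO_one_log_sub_log_of_isTheta hβQ (.of_forall hβ)
  have hw_sub : Summable fun n ↦ (Q n)⁻¹ * (w n - w (n + 1)) := by
    refine summable_of_isBigO_nat hinv ?_
    simpa only [mul_one, Function.comp_def] using
      (isBigO_refl (fun n ↦ (Q n)⁻¹) atTop).mul (hw.sub (hw.comp_tendsto (tendsto_add_atTop_nat 1)))
  refine (hw_sub.sub hlog).congr fun n ↦ ?_
  rw [log_div (hβ n) (hβ (n + 1))]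
  ring

end Growth

theorem goldenRatio_pow_le_mul {u : ℕ → ℝ} (h₀ : 1 ≤ u 0) (h₁ : 1 ≤ u 1)
    (hu : ∀ n, u (n + 1) + u n ≤ u (n + 2)) : ∀ n, goldenRatio ^ n ≤ goldenRatio * u n
  | 0 => (pow_zero _).trans_le (one_le_mul_of_one_le_of_one_le one_lt_goldenRatio.le h₀)
  | 1 => (pow_one _).trans_le (le_mul_of_one_le_right goldenRatio_pos.le h₁)
  | n + 2 => by
    calc goldenRatio ^ (n + 2) = goldenRatio ^ (n + 1) + goldenRatio ^ n := by
          rw [pow_add, goldenRatio_sq]; ring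
      _ ≤ goldenRatio * u (n + 1) + goldenRatio * u n :=
          add_le_add (goldenRatio_pow_le_mul h₀ h₁ hu (n + 1)) (goldenRatio_pow_le_mul h₀ h₁ hu n)
      _ = goldenRatio * (u (n + 1) + u n) := by ring
      _ ≤ goldenRatio * u (n + 2) := by gcongr; exact hu n

section GaussMap

/-- The Gauss map `x ↦ {1 / x}`, which shifts the continued fraction expansion. -/
noncomputable def gaussMap (x : ℝ) : ℝ := Int.fract (1 / x)

/-- The partial quotients of `θ ∈ (0, 1)`, indexed from `0`: `partialQuotient θ n` is the
paper's `rₙ₊₁`. -/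
noncomputable def partialQuotient (θ : ℝ) (n : ℕ) : ℕ := ⌊1 / gaussMap^[n] θ⌋₊

/-- The denominators `qₙ` of the convergents of `θ ∈ (0, 1)`, with `q₀ = 1`. -/
noncomputable def convergentDen (θ : ℝ) : ℕ → ℕ
  | 0 => 1
  | 1 => partialQuotient θ 0
  | n + 2 => partialQuotient θ (n + 1) * convergentDen θ (n + 1) + convergentDen θ n

/-- The weights `βₙ = θ₁ ⋯ θₙ` of Yoccoz's series. -/
noncomputable def gaussProd (θ : ℝ) (n : ℕ) : ℝ := ∏ i ∈ range n, gaussMap^[i] θ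

variable {x θ : ℝ}

theorem irrational_gaussMap (hx : Irrational x) : Irrational (gaussMap x) := by
  rw [gaussMap, ← Int.self_sub_floor, one_div]
  exact hx.inv.sub_intCast _

theorem gaussMap_pos (hx : Irrational x) : 0 < gaussMap x :=
  (Int.fract_nonneg _).lt_of_ne (irrational_gaussMap hx).ne_zero.symm

theorem mul_floor_add_gaussMap (hx : 0 < x) : x * (⌊1 / x⌋₊ + gaussMap x) = 1 := by
  rw [gaussMap, natCast_floor_eq_intCast_floor (one_div_pos.2 hx).le, Int.floor_add_fract,
    mul_one_div_cancel hx.ne']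

theorem irrational_gaussMap_iterate (hirr : Irrational θ) (n : ℕ) :
    Irrational (gaussMap^[n] θ) :=
  Function.Iterate.rec Irrational hirr (fun _ ↦ irrational_gaussMap) n

theorem gaussMap_iterate_pos (hθ : 0 < θ) (hirr : Irrational θ) : ∀ n, 0 < gaussMap^[n] θ
  | 0 => hθ
  | n + 1 => by
    rw [Function.iterate_succ_apply']
    exact gaussMap_pos (irrational_gaussMap_iterate hirr n)

theorem gaussMap_iterate_lt_one (hθ : θ < 1) : ∀ n, gaussMap^[n] θ < 1
  | 0 => hθ
  | n + 1 => by
    rw [Function.iterate_succ_apply']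
    exact Int.fract_lt_one _

theorem one_le_partialQuotient (hθ : θ ∈ Set.Ioo 0 1) (hirr : Irrational θ) (n : ℕ) :
    1 ≤ partialQuotient θ n := by
  rw [partialQuotient, Nat.one_le_floor_iff, one_le_div (gaussMap_iterate_pos hθ.1 hirr n)]
  exact (gaussMap_iterate_lt_one hθ.2 n).le

theorem convergentDen_succ_add_le (hθ : θ ∈ Set.Ioo 0 1) (hirr : Irrational θ) (n : ℕ) :
    convergentDen θ (n + 1) + convergentDen θ n ≤ convergentDen θ (n + 2) :=
  Nat.add_le_add_right
    (Nat.le_mul_of_pos_left _ (one_le_partialQuotient hθ hirr (n + 1))) _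

theorem monotone_convergentDen (hθ : θ ∈ Set.Ioo 0 1) (hirr : Irrational θ) :
    Monotone (convergentDen θ) := by
  refine monotone_nat_of_le_succ fun n ↦ ?_
  cases n with
  | zero => exact one_le_partialQuotient hθ hirr 0
  | succ n => exact (Nat.le_add_right _ _).trans (convergentDen_succ_add_le hθ hirr n)

theorem goldenRatio_pow_isBigO_convergentDen (hθ : θ ∈ Set.Ioo 0 1) (hirr : Irrational θ) :
    (fun n ↦ goldenRatio ^ n) =O[atTop] fun n ↦ (convergentDen θ n : ℝ) := by
  refine .of_bound goldenRatio (.of_forall fun n ↦ ?_)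
  rw [norm_of_nonneg (pow_nonneg goldenRatio_pos.le n), norm_of_nonneg (Nat.cast_nonneg _)]
  refine goldenRatio_pow_le_mul (u := fun n ↦ (convergentDen θ n : ℝ)) ?_ ?_ (fun n ↦ ?_) n
  · simp [convergentDen]
  · exact_mod_cast one_le_partialQuotient hθ hirr 0
  · exact_mod_cast convergentDen_succ_add_le hθ hirr n

theorem gaussProd_succ (θ : ℝ) (n : ℕ) : gaussProd θ (n + 1) = gaussProd θ n * gaussMap^[n] θ :=
  prod_range_succ _ n

theorem gaussProd_pos (hθ : 0 < θ) (hirr : Irrational θ) (n : ℕ) : 0 < gaussProd θ n :=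
  prod_pos fun i _ ↦ gaussMap_iterate_pos hθ hirr i

theorem antitone_gaussProd (hθ : θ ∈ Set.Ioo 0 1) (hirr : Irrational θ) :
    Antitone (gaussProd θ) := by
  refine antitone_nat_of_succ_le fun n ↦ ?_
  rw [gaussProd_succ]
  exact mul_le_of_le_one_right (gaussProd_pos hθ.1 hirr n).le (gaussMap_iterate_lt_one hθ.2 n).le

theorem gaussProd_eq_partialQuotient_mul_add (hθ : 0 < θ) (hirr : Irrational θ) (n : ℕ) :
    gaussProd θ n = partialQuotient θ n * gaussProd θ (n + 1) + gaussProd θ (n + 2) := by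
  have hfloor := mul_floor_add_gaussMap (gaussMap_iterate_pos hθ hirr n)
  rw [gaussProd_succ θ (n + 1), gaussProd_succ θ n, Function.iterate_succ_apply', partialQuotient]
  linear_combination -gaussProd θ n * hfloor

theorem convergentDen_mul_gaussProd_add (hθ : 0 < θ) (hirr : Irrational θ) (n : ℕ) :
    convergentDen θ (n + 1) * gaussProd θ (n + 1) + convergentDen θ n * gaussProd θ (n + 2) =
      1 := by
  induction n with
  | zero =>
    simpa [convergentDen, gaussProd] using
      (gaussProd_eq_partialQuotient_mul_add hθ hirr 0).symm
  | succ n ih =>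
    rw [convergentDen]
    push_cast
    linear_combination
      ih - convergentDen θ (n + 1) * gaussProd_eq_partialQuotient_mul_add hθ hirr (n + 1)

theorem convergentDen_mul_gaussProd_le_one (hθ : 0 < θ) (hirr : Irrational θ) (n : ℕ) :
    convergentDen θ n * gaussProd θ n ≤ 1 := by
  cases n with
  | zero => simp [convergentDen, gaussProd]
  | succ n =>
    rw [← convergentDen_mul_gaussProd_add hθ hirr n, le_add_iff_nonneg_right]
    exact mul_nonneg (Nat.cast_nonneg _) (gaussProd_pos hθ hirr _).le

theorem one_le_two_mul_convergentDen_mul_gaussProd (hθ : θ ∈ Set.Ioo 0 1) (hirr : Irrational θ)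
    (n : ℕ) : 1 ≤ 2 * (convergentDen θ n * gaussProd θ n) := by
  cases n with
  | zero => simp [convergentDen, gaussProd]
  | succ n =>
    have hle : convergentDen θ n * gaussProd θ (n + 2) ≤
        convergentDen θ (n + 1) * gaussProd θ (n + 1) :=
      mul_le_mul (Nat.cast_le.2 (monotone_convergentDen hθ hirr n.le_succ))
        (antitone_gaussProd hθ hirr (n + 1).le_succ) (gaussProd_pos hθ.1 hirr _).le
        (Nat.cast_nonneg _)
    linarith [convergentDen_mul_gaussProd_add hθ.1 hirr n]

theorem gaussProd_isTheta_inv_convergentDen (hθ : θ ∈ Set.Ioo 0 1) (hirr : Irrational θ) :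
    gaussProd θ =Θ[atTop] fun n ↦ (convergentDen θ n : ℝ)⁻¹ := by
  have hq (n : ℕ) : (0 : ℝ) < convergentDen θ n :=
    Nat.cast_pos.2 (monotone_convergentDen hθ hirr n.zero_le)
  constructor
  · refine .of_norm_le fun n ↦ ?_
    rw [norm_of_nonneg (gaussProd_pos hθ.1 hirr n).le, ← one_div, le_div_iff₀' (hq n)]
    exact convergentDen_mul_gaussProd_le_one hθ.1 hirr n
  · refine .of_bound 2 (.of_forall fun n ↦ ?_)
    rw [norm_of_nonneg (gaussProd_pos hθ.1 hirr n).le, norm_of_nonneg (inv_pos.2 (hq n)).le,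
      inv_le_iff_one_le_mul₀' (hq n), mul_left_comm]
    exact one_le_two_mul_convergentDen_mul_gaussProd hθ hirr n

theorem summable_gaussProd_mul_log_iff (hθ : θ ∈ Set.Ioo 0 1) (hirr : Irrational θ) :
    Summable (fun n ↦ gaussProd θ n * log (1 / gaussMap^[n] θ)) ↔
      Summable fun n ↦ log (convergentDen θ (n + 1)) / convergentDen θ n := by
  have hβ (n : ℕ) : gaussProd θ n ≠ 0 := (gaussProd_pos hθ.1 hirr n).ne'
  have hgrowth := goldenRatio_pow_isBigO_convergentDen hθ hirr
  simp only [← summable_mul_log_div_iff (gaussProd_isTheta_inv_convergentDen hθ hirr) hβ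
    (summable_inv_of_pow_isBigO one_lt_goldenRatio hgrowth)
    (summable_log_div_of_pow_isBigO one_lt_goldenRatio hgrowth), gaussProd_succ,
    div_mul_cancel_left₀ (hβ _), one_div]

end GaussMap

/-- for irrational `θ ∈ (0,1)`, with `θ₁ = θ`,
`θ_{n+1} = {1/θ_n}` the Gauss-map orbit and `q_n` the denominators of the
continued fraction convergents of `θ`, the Brjuno-Yoccoz series
`Σ θ₁⋯θ_{n-1} log(1/θ_n)` converges iff `Σ log(q_{n+1})/q_n` converges. -/
theorem brjuno_iff_yoccoz
    (θ : ℝ) (hθ : θ ∈ Set.Ioo (0 : ℝ) 1) (hirr : Irrational θ)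
    (θseq : ℕ → ℝ) (hθ1 : θseq 1 = θ)
    (hθrec : ∀ n, 1 ≤ n → θseq (n + 1) = Int.fract (1 / θseq n))
    (q : ℕ → ℕ) (hq0 : q 0 = 1) (hq1 : q 1 = ⌊1 / θ⌋₊)
    (hqrec : ∀ n, 1 ≤ n → q (n + 1) = ⌊1 / θseq (n + 1)⌋₊ * q n + q (n - 1)) :
    Summable (fun m : ℕ =>
        (∏ i ∈ Finset.Ico 1 (m + 1), θseq i) * Real.log (1 / θseq (m + 1))) ↔
      Summable (fun m : ℕ => Real.log (q (m + 2)) / (q (m + 1))) := by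
  have orbit (n : ℕ) : θseq (n + 1) = gaussMap^[n] θ := by
    induction n with
    | zero => exact hθ1
    | succ n ih => rw [hθrec (n + 1) n.succ_pos, ih, Function.iterate_succ_apply', gaussMap]
  have den (n : ℕ) : q n = convergentDen θ n := by
    induction n using Nat.twoStepInduction with
    | zero => exact hq0
    | one => exact hq1
    | more n ih₀ ih₁ =>
      rw [hqrec (n + 1) n.succ_pos, Nat.add_sub_cancel, ih₀, ih₁, orbit, convergentDen,
        partialQuotient]
  have prod (m : ℕ) : ∏ i ∈ Ico 1 (m + 1), θseq i = gaussProd θ m := by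
    simp only [gaussProd, ← orbit, range_eq_Ico, prod_Ico_add' θseq 0 m 1, zero_add]
  simp only [prod, orbit, den]
  rw [summable_gaussProd_mul_log_iff hθ hirr]
  exact (summable_nat_add_iff 1).symm
end
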